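/- arXiv:2208.02109 — 2 statements merged into one kernel-verified Lean document; each statement's English description precedes it below -/
import Mathlib

section
/- Let d ≥ 7 be an odd integer with d ≡ 1 or 7 (mod 8). Then the number of connected components C of S_d with the property that {u⁻¹ : u ∈ C} = C is exactly 2^{(d+1)/2}. -/
/-- `u` is upper triangular with all diagonal entries equal to `1`. -/
def IsUniUpper (d : ℕ) (u : Matrix (Fin d) (Fin d) ℝ) : Prop :=
  (∀ i j : Fin d, (j : ℕ) < (i : ℕ) → u i j = 0) ∧ (∀ i : Fin d, u i i = 1)

/-- `p_k(u)`: the determinant of the upper-right `k × k` block of `u`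
(rows `1,…,k` and columns `d−k+1,…,d`, in one-based indexing). -/
noncomputable def cornerMinor (d k : ℕ) (u : Matrix (Fin d) (Fin d) ℝ) : ℝ :=
  Matrix.det (Matrix.of fun i j : Fin k =>
    if h : (i : ℕ) < d ∧ d - k + (j : ℕ) < d then u ⟨i, h.1⟩ ⟨d - k + j, h.2⟩ else 0)

/-- `S_d = {u ∈ U_d : p_k(u) ≠ 0 for all 1 ≤ k ≤ d−1}`. -/
def Sset (d : ℕ) : Set (Matrix (Fin d) (Fin d) ℝ) :=
  {u | IsUniUpper d u ∧ ∀ k : ℕ, 1 ≤ k → k ≤ d - 1 → cornerMinor d k u ≠ 0}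

/-!
For every point `(k, j)` of the grid `k, j ≥ 1`, `k + j ≤ d`, consider the minor of `u` with the
first `k` rows and the `k` columns starting at `j` (from `0`). Ordered by rows, these minors form a
triangular family: each is affine in one new matrix entry, with slope an earlier minor. Hence every
sign pattern is realised on a connected set, and up to codimension two the components of `S_d` are
obtained by gluing these sets along the walls where one minor off the hypotenuse `k + j = d`
vanishes. On such a wall a Plücker relation makes the signs of the six neighbouring minors sum to
`1` modulo `2`, and all patterns with this property occur. Crossing the wall is therefore the
transvection in a basis vector for the quadratic form over `𝔽₂` attached to the triangular grid, and
the components are the orbits of these transvections on sign patterns.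

For `d ≥ 6` the grid contains the Dynkin diagram `E₆`, which makes the orbits as large as possible:
apart from fixed patterns, they are classified by the values on the hypotenuse and by the quadratic
form. Inversion transposes the grid and adds `k * j` modulo `2`. For odd `d` it fixes no pattern,
and it preserves the hypotenuse values exactly when these are palindromic; for `d ≡ ±1` modulo `8`
it then preserves the quadratic form as well. A component is thus invariant exactly when its
patterns are movable and palindromic on the hypotenuse, which leaves `2 ^ ((d - 1) / 2)` hypotenuse
values and two values of the form.
-/

namespace UnipotentCells

/-! ### Orbits of transvections modulo 2 -/

section TransvectionOrbits

open Function QuadraticMap Relation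
open scoped Matrix

section Transvections

variable {E : Type*} [AddCommGroup E] [Module (ZMod 2) E] (Q : QuadraticForm (ZMod 2) E)

/-- `t` is the image of `s` under the orthogonal transvection in some vector of `M`. When `Q = 1`
on `M`, these transvections preserve `Q`. -/
def TransvectionStep (M : Set E) (s t : E) : Prop := ∃ v ∈ M, t = s + polar Q s v • v

/-- `s` and `t` lie in one orbit of the group generated by the transvections in the vectors
of `M`. -/
def SameOrbit (M : Set E) : E → E → Prop := ReflTransGen (TransvectionStep Q M)

/-- `s` is not fixed by all the transvections in the vectors of `M`. -/
def Movable (M : Set E) (s : E) : Prop := ∃ v ∈ M, polar Q s v ≠ 0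

/-- The orbits of movable vectors are as large as they can be: they are separated by `Q` and by
the class modulo the span of `M`, which are evident invariants. -/
def OrbitsMaximal (M : Set E) : Prop :=
  ∀ ⦃s t⦄, t - s ∈ Submodule.span (ZMod 2) M → Q s = Q t → Movable Q M s → Movable Q M t →
    SameOrbit Q M s t

variable {Q} {M N : Set E} {s t v : E}

lemma zmod_two_eq_one_of_ne_zero : ∀ {a : ZMod 2}, a ≠ 0 → a = 1 := by decide

lemma polar_self_eq_zero (x : E) : polar Q x x = 0 := by
  rw [polar_self, ZModModule.char_nsmul_eq_zero]

lemma TransvectionStep.symm (h : TransvectionStep Q M s t) : TransvectionStep Q M t s := by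
  obtain ⟨v, hv, rfl⟩ := h
  refine ⟨v, hv, ?_⟩
  rw [polar_add_left, polar_smul_left, polar_self_eq_zero, smul_zero, add_zero, add_assoc,
    ZModModule.add_self, add_zero]

lemma TransvectionStep.apply_eq (hM : ∀ v ∈ M, Q v = 1) (h : TransvectionStep Q M s t) :
    Q s = Q t := by
  obtain ⟨v, hv, rfl⟩ := h
  rw [QuadraticMap.map_add Q, QuadraticMap.map_smul, hM v hv, polar_smul_right, smul_eq_mul,
    smul_eq_mul, mul_one, add_assoc, CharTwo.add_self_eq_zero, add_zero]

lemma SameOrbit.symm (h : SameOrbit Q M s t) : SameOrbit Q M t s :=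
  have : Std.Symm (TransvectionStep Q M) := ⟨fun _ _ => TransvectionStep.symm⟩
  (ReflTransGen.stdSymm).symm _ _ h

lemma SameOrbit.mono (hMN : M ⊆ N) (h : SameOrbit Q M s t) : SameOrbit Q N s t :=
  ReflTransGen.mono (fun _ _ ⟨v, hv, h⟩ => ⟨v, hMN hv, h⟩) _ _ h

lemma SameOrbit.apply_eq (hM : ∀ v ∈ M, Q v = 1) (h : SameOrbit Q M s t) : Q s = Q t := by
  induction h with
  | refl => rfl
  | tail _ h ih => exact ih.trans (h.apply_eq hM)

lemma SameOrbit.sub_mem_span (h : SameOrbit Q M s t) : t - s ∈ Submodule.span (ZMod 2) M := by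
  induction h with
  | refl => simp
  | tail _ h ih =>
    obtain ⟨v, hv, rfl⟩ := h
    rw [add_sub_right_comm]
    exact add_mem ih (Submodule.smul_mem _ _ (Submodule.subset_span hv))

lemma SameOrbit.eq_of_not_movable (h : SameOrbit Q M s t) (hs : ¬ Movable Q M s) : t = s := by
  induction h with
  | refl => rfl
  | tail _ h ih =>
    obtain ⟨v, hv, rfl⟩ := h
    have : polar Q s v = 0 := not_not.1 fun hne => hs ⟨v, hv, hne⟩
    rw [ih, this, zero_smul, add_zero]

lemma SameOrbit.movable_iff (h : SameOrbit Q M s t) : Movable Q M s ↔ Movable Q M t := by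
  refine ⟨fun hs => ?_, fun ht => ?_⟩ <;> by_contra hcon
  · exact hcon (h.symm.eq_of_not_movable hcon ▸ hs)
  · exact hcon (h.eq_of_not_movable hcon ▸ ht)

lemma sameOrbit_add (hv : v ∈ M) (h : polar Q s v = 1) : SameOrbit Q M s (s + v) :=
  .single ⟨v, hv, by rw [h, one_smul]⟩

lemma Movable.mono (hMN : M ⊆ N) (h : Movable Q M s) : Movable Q N s :=
  let ⟨v, hv, hne⟩ := h
  ⟨v, hMN hv, hne⟩

end Transvections

section E6

/-- The Cartan matrix of type `E₆` modulo `2`. -/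
abbrev cartanE6 : Matrix (Fin 6) (Fin 6) (ZMod 2) := CartanMatrix.E₆.map Int.cast

/-- Half the square length of a vector of the `E₆` root lattice, modulo `2`. -/
def formE6 (c : Fin 6 → ZMod 2) : ZMod 2 :=
  ∑ a, c a + (c 0 * c 2 + c 1 * c 3 + c 2 * c 3 + c 3 * c 4 + c 4 * c 5)

/-- The image of `c` under the first `n` factors of the periodic product of simple reflections
`s₀, s₁, …, s₅, s₀, s₁, …`. -/
def cyclicWalk (c : Fin 6 → ZMod 2) : ℕ → Fin 6 → ZMod 2
  | 0 => c
  | n + 1 =>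
    cyclicWalk c n + Pi.single (Fin.ofNat 6 n) ((cyclicWalk c n ᵥ* cartanE6) (Fin.ofNat 6 n))

/-- A representative of the nonzero vectors on which `formE6` takes the value `q`. -/
def repE6 (q : ZMod 2) : Fin 6 → ZMod 2 :=
  if q = 0 then ![1, 0, 0, 0, 1, 0] else ![0, 0, 1, 1, 0, 0]

-- The product of the six simple reflections is a Coxeter element; its order is `12 = 72 / 6`.
lemma exists_cyclicWalk_eq_repE6 :
    ∀ c : Fin 6 → ZMod 2, c ≠ 0 → ∃ n ∈ Finset.range 72, cyclicWalk c n = repE6 (formE6 c) := by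
  decide +kernel

lemma vecMul_cartanE6_eq_zero : ∀ c : Fin 6 → ZMod 2, c ᵥ* cartanE6 = 0 → c = 0 := by
  decide +kernel

lemma vecMul_cartanE6_surjective : Surjective (· ᵥ* cartanE6) :=
  Finite.surjective_of_injective <|
    (injective_iff_map_eq_zero cartanE6.vecMulLinear).2 vecMul_cartanE6_eq_zero

lemma exists_formE6_eq : ∀ (e : Fin 6 → ZMod 2) (p q : ZMod 2), (e = 0 → p = 0) →
    ∃ z, z ≠ 0 ∧ z ≠ e ∧ formE6 z = q ∧ z ⬝ᵥ (e ᵥ* cartanE6) = p := by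
  decide +kernel

end E6

section Frame

variable {E : Type*} [AddCommGroup E] [Module (ZMod 2) E] {Q : QuadraticForm (ZMod 2) E}

/-- The vectors `r a` have the same norms and pairwise pairings as the simple roots of the `E₆` root
lattice modulo `2`. -/
structure IsE6Frame (Q : QuadraticForm (ZMod 2) E) (r : Fin 6 → E) : Prop where
  apply_eq_one : ∀ a, Q (r a) = 1
  polar_eq : ∀ a b, polar Q (r a) (r b) = cartanE6 a b

variable {r : Fin 6 → E} {M : Set E} {v : E}

local notation "lin" => Fintype.linearCombination (ZMod 2)

lemma polar_linearCombination_left (c : Fin 6 → ZMod 2) (x : E) :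
    polar Q (lin r c) x = c ⬝ᵥ fun a => polar Q (r a) x := by
  rw [← polarBilin_apply_apply, Fintype.linearCombination_apply, map_sum, LinearMap.sum_apply]
  simp [dotProduct]

lemma polar_linearCombination_eq_zero {x : E} (hx : ∀ a, polar Q x (r a) = 0)
    (c : Fin 6 → ZMod 2) : polar Q x (lin r c) = 0 := by
  rw [polar_comm, polar_linearCombination_left]
  simp [polar_comm Q (r _) x, hx, dotProduct]

namespace IsE6Frame

variable (hr : IsE6Frame Q r)
include hr

lemma polar_linearCombination (c : Fin 6 → ZMod 2) (b : Fin 6) :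
    polar Q (lin r c) (r b) = (c ᵥ* cartanE6) b := by
  simp only [polar_linearCombination_left, hr.polar_eq, Matrix.vecMul]

lemma apply_linearCombination (c : Fin 6 → ZMod 2) : Q (lin r c) = formE6 c := by
  have hsq (x : ZMod 2) : x * x = x := by revert x; decide
  simp only [Fintype.linearCombination_apply, Fin.sum_univ_six, QuadraticMap.map_add Q,
    QuadraticMap.map_smul, polar_add_left, polar_smul_left, polar_smul_right, hr.apply_eq_one,
    hr.polar_eq, hsq, formE6]
  have hE : cartanE6 = !![0, 0, 1, 0, 0, 0; 0, 0, 0, 1, 0, 0; 1, 0, 0, 1, 0, 0;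
      0, 1, 1, 0, 1, 0; 0, 0, 0, 1, 0, 1; 0, 0, 0, 0, 1, 0] := by decide
  simp [hE]
  ring

lemma exists_eq_add_linearCombination (s : E) :
    ∃ x c, s = x + lin r c ∧ ∀ a, polar Q x (r a) = 0 := by
  obtain ⟨c, hc⟩ := vecMul_cartanE6_surjective fun a => polar Q s (r a)
  refine ⟨s - lin r c, c, by abel, fun a => ?_⟩
  exact (polar_sub_left ..).trans
    (sub_eq_zero.2 ((congrFun hc a).symm.trans (hr.polar_linearCombination c a).symm))

variable {x : E} (hx : ∀ a, polar Q x (r a) = 0)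
include hx

lemma apply_add_linearCombination (c : Fin 6 → ZMod 2) : Q (x + lin r c) = Q x + formE6 c := by
  rw [QuadraticMap.map_add Q, polar_linearCombination_eq_zero hx, hr.apply_linearCombination,
    add_zero]

lemma polar_add_linearCombination (c : Fin 6 → ZMod 2) (a : Fin 6) :
    polar Q (x + lin r c) (r a) = (c ᵥ* cartanE6) a := by
  rw [polar_add_left, hx, zero_add, hr.polar_linearCombination]

lemma movable_add_linearCombination_iff {c : Fin 6 → ZMod 2} :
    Movable Q (Set.range r) (x + lin r c) ↔ c ≠ 0 := by
  simp only [Movable, Set.exists_range_iff, hr.polar_add_linearCombination hx]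
  refine Function.ne_iff.symm.trans (not_congr ⟨vecMul_cartanE6_eq_zero c, fun h => ?_⟩)
  rw [h, Matrix.zero_vecMul]
  rfl

lemma sameOrbit_cyclicWalk (c : Fin 6 → ZMod 2) (n : ℕ) :
    SameOrbit Q (Set.range r) (x + lin r c) (x + lin r (cyclicWalk c n)) := by
  induction n with
  | zero => exact .refl
  | succ n ih =>
    refine ih.tail ⟨_, Set.mem_range_self (Fin.ofNat 6 n), ?_⟩
    rw [hr.polar_add_linearCombination hx, cyclicWalk, map_add,
      Fintype.linearCombination_apply_single, add_assoc]

lemma sameOrbit_repE6 {c : Fin 6 → ZMod 2} (hc : c ≠ 0) :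
    SameOrbit Q (Set.range r) (x + lin r c) (x + lin r (repE6 (formE6 c))) := by
  obtain ⟨n, -, hn⟩ := exists_cyclicWalk_eq_repE6 c hc
  exact hn ▸ hr.sameOrbit_cyclicWalk hx c n

omit hx

theorem orbitsMaximal : OrbitsMaximal Q (Set.range r) := by
  intro s t hst hQ hs ht
  obtain ⟨x, c, rfl, hx⟩ := hr.exists_eq_add_linearCombination s
  obtain ⟨w, hw⟩ := (Submodule.mem_span_range_iff_exists_fun _).1 hst
  obtain rfl : t = x + lin r (c + w) := by
    rw [map_add, Fintype.linearCombination_apply _ _ w, hw]; abel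
  rw [hr.movable_add_linearCombination_iff hx] at hs ht
  rw [hr.apply_add_linearCombination hx, hr.apply_add_linearCombination hx, add_right_inj] at hQ
  exact (hr.sameOrbit_repE6 hx hs).trans (hQ ▸ (hr.sameOrbit_repE6 hx ht).symm)

lemma exists_mem_span_movable (s e : E) (q : ZMod 2) :
    ∃ y ∈ Submodule.span (ZMod 2) (Set.range r), polar Q y e = 0 ∧ Q (s + y) = q ∧
      Movable Q (Set.range r) (s + y) ∧ Movable Q (Set.range r) (s + y + e) := by
  obtain ⟨x, c, rfl, hx⟩ := hr.exists_eq_add_linearCombination s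
  obtain ⟨x', e, rfl, hx'⟩ := hr.exists_eq_add_linearCombination e
  obtain ⟨z, hz, hze, hzq, hzc⟩ := exists_formE6_eq e (c ⬝ᵥ (e ᵥ* cartanE6)) (q - Q x)
    (by rintro rfl; simp)
  have hsum : x + lin r c + lin r (z - c) = x + lin r z := by rw [map_sub]; abel
  refine ⟨lin r (z - c), ?_, ?_, ?_, ?_, ?_⟩
  · exact (Submodule.mem_span_range_iff_exists_fun _).2 ⟨_, rfl⟩
  · simp only [polar_linearCombination_left, polar_comm Q (r _),
      hr.polar_add_linearCombination hx', sub_dotProduct, hzc, sub_self]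
  · rw [hsum, hr.apply_add_linearCombination hx, hzq, add_sub_cancel]
  · rwa [hsum, hr.movable_add_linearCombination_iff hx]
  · rw [hsum, add_add_add_comm, ← map_add, hr.movable_add_linearCombination_iff fun a => by
      rw [polar_add_left, hx, hx', add_zero]]
    rwa [Ne, ← ZModModule.sub_eq_add, sub_eq_zero]

end IsE6Frame

lemma Movable.exists_sameOrbit_of_insert {w s : E} (hw : w ∈ M) (hvw : polar Q v w = 1)
    (hs : Movable Q (insert v M) s) : ∃ s', SameOrbit Q (insert v M) s s' ∧ Movable Q M s' := by
  by_cases hsM : Movable Q M s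
  · exact ⟨s, .refl, hsM⟩
  have hsw : polar Q s w = 0 := not_not.1 fun h => hsM ⟨w, hw, h⟩
  obtain ⟨u, rfl | hu, hsu⟩ := hs
  · refine ⟨s + u, sameOrbit_add (M.mem_insert u) (zmod_two_eq_one_of_ne_zero hsu), w, hw, ?_⟩
    rw [polar_add_left, hsw, hvw]
    decide
  · exact absurd ⟨u, hu, hsu⟩ hsM

section Insert

variable (hr : IsE6Frame Q r) (hrM : Set.range r ⊆ M) {w : E} (hw : w ∈ M)
  (hvw : polar Q v w = 1) (hM : OrbitsMaximal Q M)
include hr hrM hw hvw hM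

lemma OrbitsMaximal.exists_sameOrbit_sub_mem {s : E} (hs : Movable Q M s) :
    ∃ s', SameOrbit Q (insert v M) s s' ∧ Movable Q M s' ∧
      s' - s - v ∈ Submodule.span (ZMod 2) M := by
  obtain ⟨l, hl, hlv⟩ : ∃ l ∈ Submodule.span (ZMod 2) M, polar Q (s + l) v = 1 := by
    by_cases h : polar Q s v = 0
    · exact ⟨w, Submodule.subset_span hw, by rw [polar_add_left, h, polar_comm, hvw, zero_add]⟩
    · exact ⟨0, zero_mem _, by rw [add_zero]; exact zmod_two_eq_one_of_ne_zero h⟩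
  obtain ⟨y, hy, hyv, hyQ, hy₁, hy₂⟩ := hr.exists_mem_span_movable (s + l) v (Q s)
  have hly : l + y ∈ Submodule.span (ZMod 2) M := add_mem hl (Submodule.span_mono hrM hy)
  have hreach : SameOrbit Q M s (s + l + y) :=
    hM (by rwa [add_assoc, add_sub_cancel_left]) hyQ.symm hs (hy₁.mono hrM)
  refine ⟨s + l + y + v, (hreach.mono (M.subset_insert v)).trans
    (sameOrbit_add (M.mem_insert v) ?_), hy₂.mono hrM, ?_⟩
  · rw [polar_add_left, hlv, hyv, add_zero]
  · convert hly using 1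
    abel

theorem OrbitsMaximal.insert (hMQ : ∀ u ∈ M, Q u = 1) (hvQ : Q v = 1) :
    OrbitsMaximal Q (insert v M) := by
  have hQ' : ∀ u ∈ Insert.insert v M, Q u = 1 := Set.forall_mem_insert.2 ⟨hvQ, hMQ⟩
  suffices key : ∀ ⦃s t⦄, t - s ∈ Submodule.span (ZMod 2) (Insert.insert v M) → Q s = Q t →
      Movable Q M s → Movable Q M t → SameOrbit Q (Insert.insert v M) s t by
    intro s t hst hQ hs ht
    obtain ⟨s', hss', hs'⟩ := hs.exists_sameOrbit_of_insert hw hvw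
    obtain ⟨t', htt', ht'⟩ := ht.exists_sameOrbit_of_insert hw hvw
    refine hss'.trans ((key ?_ ?_ hs' ht').trans htt'.symm)
    · convert sub_mem (add_mem hst htt'.sub_mem_span) hss'.sub_mem_span using 1
      abel
    · rw [← hss'.apply_eq hQ', ← htt'.apply_eq hQ', hQ]
  intro s t hst hQ hs ht
  obtain ⟨a, l, hl, hal⟩ := Submodule.mem_span_insert.1 hst
  by_cases ha : a = 0
  · rw [ha, zero_smul, zero_add] at hal
    exact (hM (hal ▸ hl) hQ hs ht).mono (M.subset_insert v)
  obtain ⟨s', hss', hs', hsv⟩ := hM.exists_sameOrbit_sub_mem hr hrM hw hvw hs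
  rw [zmod_two_eq_one_of_ne_zero ha, one_smul] at hal
  refine hss'.trans ((hM ?_ ?_ hs' ht).mono (M.subset_insert v))
  · convert sub_mem hl hsv using 1
    rw [eq_sub_of_add_eq' hal.symm]
    abel
  · rw [← hss'.apply_eq hQ', hQ]

end Insert

theorem OrbitsMaximal.of_connected (hr : IsE6Frame Q r) (hMfin : M.Finite) (hrM : Set.range r ⊆ M)
    (hMQ : ∀ u ∈ M, Q u = 1)
    (hconn : ∀ K, Set.range r ⊆ K → K ⊂ M → ∃ v ∈ M, v ∉ K ∧ ∃ w ∈ K, polar Q v w = 1) :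
    OrbitsMaximal Q M := by
  obtain ⟨K, ⟨hKM, hrK, hK⟩, hKmax⟩ :=
    (hMfin.finite_subsets.subset (t := {K | K ⊆ M ∧ Set.range r ⊆ K ∧ OrbitsMaximal Q K})
      fun K hK => hK.1).exists_maximal ⟨Set.range r, hrM, subset_rfl, hr.orbitsMaximal⟩
  obtain rfl | hne := hKM.eq_or_ssubset
  · exact hK
  obtain ⟨v, hvM, hvK, w, hw, hvw⟩ := hconn K hrK hne
  have hins := hK.insert hr hrK hw hvw (fun u hu => hMQ u (hKM hu)) (hMQ v hvM)
  exact absurd (hKmax ⟨Set.insert_subset hvM hKM, hrK.trans (K.subset_insert v), hins⟩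
    (K.subset_insert v) (K.mem_insert v)) hvK

end Frame

end TransvectionOrbits

/-! ### The triangular grid -/

section Grid

open Function QuadraticMap Relation

/-- A vertex of the triangular grid of side `d - 1`. It indexes the minor of a unitriangular `d × d`
matrix of order `row` whose rows are the first ones and whose columns are consecutive, starting at
`col` (counted from `0`). -/
@[ext]
structure Vertex (d : ℕ) where
  row : ℕ
  col : ℕ
  row_pos : 0 < row
  col_pos : 0 < col
  row_add_col_le : row + col ≤ d

namespace Vertex

variable {d : ℕ}

instance : Finite (Vertex d) :=
  .of_injective (fun v => ((⟨v.row, by have := v.3; have := v.5; omega⟩,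
    ⟨v.col, by have := v.5; omega⟩) : Fin (d + 1) × Fin (d + 1))) fun v w h => by
      ext <;> simp_all

instance : LinearOrder (Vertex d) :=
  LinearOrder.lift' (fun v => toLex (v.row, v.col)) fun v w h => by
    have := Prod.mk.inj (toLex_inj.1 h)
    exact Vertex.ext this.1 this.2

lemma lt_iff {v w : Vertex d} : v < w ↔ v.row < w.row ∨ v.row = w.row ∧ v.col < w.col :=
  Prod.Lex.toLex_lt_toLex

noncomputable instance : Fintype (Vertex d) := .ofFinite _

/-- The vertices off the hypotenuse `row + col = d`: the others index the minors that cannot vanish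
on `Sset d`. -/
def IsMutable (v : Vertex d) : Prop := v.row + v.col < d

lemma isMutable_iff {v : Vertex d} : v.IsMutable ↔ v.row + v.col ≠ d :=
  v.row_add_col_le.lt_iff_ne

end Vertex

variable {d : ℕ} {s t : Vertex d → ZMod 2} {v : Vertex d}

variable (d) in
/-- The value at the point `(k, j)` of a function on the grid, `0` off the grid. -/
def entry (k j : ℕ) : (Vertex d → ZMod 2) →ₗ[ZMod 2] ZMod 2 :=
  if h : 0 < k ∧ 0 < j ∧ k + j ≤ d then LinearMap.proj ⟨k, j, h.1, h.2.1, h.2.2⟩ else 0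

lemma entry_row_col (s : Vertex d → ZMod 2) (v : Vertex d) : entry d v.row v.col s = s v := by
  simp [entry, v.row_pos, v.col_pos, v.row_add_col_le]

lemma entry_single (v : Vertex d) (k j : ℕ) :
    entry d k j (Pi.single v 1) = if k = v.row ∧ j = v.col then 1 else 0 := by
  have := v.row_pos; have := v.col_pos; have := v.row_add_col_le
  rw [entry]
  split_ifs with h h' h' <;> simp_all [Vertex.ext_iff]

/-- The sum of the values at the six neighbours of a vertex. -/
def neighbourSum (s : Vertex d → ZMod 2) (v : Vertex d) : ZMod 2 :=
  entry d (v.row + 1) v.col s + entry d v.row (v.col - 1) s + entry d (v.row - 1) (v.col + 1) s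
    + entry d v.row (v.col + 1) s + entry d (v.row - 1) v.col s + entry d (v.row + 1) (v.col - 1) s

variable (d) in
/-- The quadratic form modulo `2` of the triangular grid: vertices have norm `1`, and adjacent
vertices pair to `1`. -/
def gridForm : QuadraticForm (ZMod 2) (Vertex d → ZMod 2) :=
  ∑ p ∈ Finset.range (d + 1) ×ˢ Finset.range (d + 1),
    (sq.comp (entry d p.1 p.2) + linMulLin (entry d p.1 p.2) (entry d (p.1 + 1) p.2)
      + linMulLin (entry d p.1 p.2) (entry d p.1 (p.2 + 1))
      + linMulLin (entry d (p.1 + 1) p.2) (entry d p.1 (p.2 + 1)))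

lemma gridForm_apply (s : Vertex d → ZMod 2) :
    gridForm d s = ∑ p ∈ Finset.range (d + 1) ×ˢ Finset.range (d + 1),
      (entry d p.1 p.2 s + entry d p.1 p.2 s * entry d (p.1 + 1) p.2 s
        + entry d p.1 p.2 s * entry d p.1 (p.2 + 1) s
        + entry d (p.1 + 1) p.2 s * entry d p.1 (p.2 + 1) s) := by
  have hsq (x : ZMod 2) : x * x = x := by revert x; decide
  simp [gridForm, hsq]

lemma gridForm_single (v : Vertex d) : gridForm d (Pi.single v 1) = 1 := by
  have hv := v.row_add_col_le
  rw [gridForm_apply, Finset.sum_eq_single_of_mem (v.row, v.col)]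
  · simp [entry_single]
  · simp; omega
  · intro p _ hp
    simp only [entry_single]
    rw [Ne, Prod.ext_iff] at hp
    split_ifs <;> first | omega | simp

lemma polar_gridForm_single (s : Vertex d → ZMod 2) (v : Vertex d) :
    polar (gridForm d) s (Pi.single v 1) = neighbourSum s v := by
  obtain ⟨k, j, hk, hj, hkj⟩ := v
  obtain ⟨k, rfl⟩ := Nat.exists_eq_succ_of_ne_zero hk.ne'
  obtain ⟨j, rfl⟩ := Nat.exists_eq_succ_of_ne_zero hj.ne'
  have hpolar : ∀ t : Vertex d → ZMod 2, polar (gridForm d) s t =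
      ∑ p ∈ Finset.range (d + 1) ×ˢ Finset.range (d + 1),
        (entry d p.1 p.2 s * entry d (p.1 + 1) p.2 t + entry d p.1 p.2 t * entry d (p.1 + 1) p.2 s
        + (entry d p.1 p.2 s * entry d p.1 (p.2 + 1) t
          + entry d p.1 p.2 t * entry d p.1 (p.2 + 1) s)
        + (entry d (p.1 + 1) p.2 s * entry d p.1 (p.2 + 1) t
          + entry d (p.1 + 1) p.2 t * entry d p.1 (p.2 + 1) s)) := fun t => by
    simp only [polar, gridForm_apply, map_add, ← Finset.sum_sub_distrib]
    exact Finset.sum_congr rfl fun p _ => by ring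
  simp only [hpolar, Finset.sum_add_distrib, Finset.sum_product, entry_single, ite_and, mul_ite,
    mul_one, mul_zero, ite_mul, one_mul, zero_mul, Nat.succ_eq_add_one, Nat.add_right_cancel_iff]
  simp [Finset.sum_ite_eq', neighbourSum, show k < d + 1 by omega, show j < d + 1 by omega,
    show k + 1 ≤ d by omega, show j + 1 ≤ d by omega]
  ring

variable (d) in
/-- The basis vectors at the mutable vertices. -/
def mutableVectors : Set (Vertex d → ZMod 2) := (fun v => Pi.single v 1) '' {v | v.IsMutable}

lemma mem_span_mutableVectors_iff :
    s ∈ Submodule.span (ZMod 2) (mutableVectors d) ↔ ∀ v : Vertex d, ¬ v.IsMutable → s v = 0 := by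
  refine ⟨fun hs v hv => ?_, fun hs => ?_⟩
  · refine Submodule.span_le (p := LinearMap.ker (LinearMap.proj (R := ZMod 2) v)).2 ?_ hs
    rintro _ ⟨w, hw, rfl⟩
    exact Pi.single_eq_of_ne (by rintro rfl; exact hv hw) 1
  · rw [← Finset.univ_sum_single s]
    refine Submodule.sum_mem _ fun v _ => ?_
    by_cases hv : v.IsMutable
    · rw [← mul_one (s v), ← smul_eq_mul, Pi.single_smul]
      exact Submodule.smul_mem _ _ (Submodule.subset_span ⟨v, hv, rfl⟩)
    · rw [hs v hv, Pi.single_zero]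
      exact zero_mem _

/-- A copy of the Dynkin diagram `E₆` among the mutable vertices. -/
def vertexE6 (hd : 6 ≤ d) : Fin 6 → Vertex d :=
  ![⟨1, 4, by omega, by omega, by omega⟩, ⟨3, 2, by omega, by omega, by omega⟩,
    ⟨1, 3, by omega, by omega, by omega⟩, ⟨2, 2, by omega, by omega, by omega⟩,
    ⟨2, 1, by omega, by omega, by omega⟩, ⟨1, 1, by omega, by omega, by omega⟩]

lemma isMutable_vertexE6 (hd : 6 ≤ d) (a : Fin 6) : (vertexE6 hd a).IsMutable := by
  fin_cases a <;> simp [vertexE6, Vertex.IsMutable] <;> omega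

lemma isE6Frame_vertexE6 (hd : 6 ≤ d) :
    IsE6Frame (gridForm d) fun a => Pi.single (vertexE6 hd a) 1 where
  apply_eq_one _ := gridForm_single _
  polar_eq a b := by
    rw [polar_gridForm_single]
    fin_cases a <;> fin_cases b <;>
      simp [vertexE6, neighbourSum, entry_single, CartanMatrix.E₆] <;> rfl

lemma range_vertexE6_subset (hd : 6 ≤ d) :
    Set.range (fun a => Pi.single (vertexE6 hd a) 1) ⊆ mutableVectors d := by
  rintro _ ⟨a, rfl⟩
  exact ⟨_, isMutable_vertexE6 hd a, rfl⟩

lemma exists_adjacent_of_ssubset (hd : 6 ≤ d) {K : Set (Vertex d → ZMod 2)}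
    (hK : Set.range (fun a => Pi.single (vertexE6 hd a) 1) ⊆ K) (hKd : K ⊂ mutableVectors d) :
    ∃ v ∈ mutableVectors d, v ∉ K ∧ ∃ w ∈ K, polar (gridForm d) v w = 1 := by
  obtain ⟨_, ⟨u, hu, rfl⟩, huK⟩ := Set.exists_of_ssubset hKd
  obtain ⟨v, ⟨hv, hvK⟩, hmin⟩ := Set.exists_min_image
    {v : Vertex d | v.IsMutable ∧ (Pi.single v 1 : Vertex d → ZMod 2) ∉ K}
    (fun v => v.row + v.col) (Set.toFinite _) ⟨u, hu, huK⟩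
  refine ⟨_, ⟨v, hv, rfl⟩, hvK, ?_⟩
  suffices ∃ w : Vertex d, w.row + w.col < v.row + v.col ∧
      polar (gridForm d) (Pi.single v 1) (Pi.single w 1) = 1 by
    obtain ⟨w, hlt, hw⟩ := this
    refine ⟨_, by_contra fun hwK => ?_, hw⟩
    exact hlt.not_ge (hmin w ⟨hlt.trans hv, hwK⟩)
  obtain ⟨k, j, hk, hj, hkj⟩ := v
  have h11 : (k, j) ≠ (1, 1) := by
    rintro ⟨⟩
    exact hvK (hK ⟨5, rfl⟩)
  simp only [polar_gridForm_single, neighbourSum, entry_single]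
  obtain h | h : 1 < k ∨ 1 < j := by
    rw [Ne, Prod.mk.injEq] at h11
    omega
  · refine ⟨⟨k - 1, j, by omega, hj, by omega⟩, by dsimp only; omega, ?_⟩
    dsimp only
    split_ifs <;> first | rfl | omega
  · refine ⟨⟨k, j - 1, hk, by omega, by omega⟩, by dsimp only; omega, ?_⟩
    dsimp only
    split_ifs <;> first | rfl | omega

lemma apply_eq_one_of_mem_mutableVectors {x : Vertex d → ZMod 2} (hx : x ∈ mutableVectors d) :
    gridForm d x = 1 := by
  obtain ⟨v, -, rfl⟩ := hx
  exact gridForm_single v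

theorem orbitsMaximal_gridForm (hd : 6 ≤ d) : OrbitsMaximal (gridForm d) (mutableVectors d) := by
  refine .of_connected (isE6Frame_vertexE6 hd) (Set.toFinite _) (range_vertexE6_subset hd)
    (fun _ => apply_eq_one_of_mem_mutableVectors) fun K => exists_adjacent_of_ssubset hd

theorem sameOrbit_mutableVectors_iff (hd : 6 ≤ d) :
    SameOrbit (gridForm d) (mutableVectors d) s t ↔
      s = t ∨ Movable (gridForm d) (mutableVectors d) s ∧
        Movable (gridForm d) (mutableVectors d) t ∧
        (∀ v : Vertex d, ¬ v.IsMutable → s v = t v) ∧ gridForm d s = gridForm d t := by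
  have hspan : t - s ∈ Submodule.span (ZMod 2) (mutableVectors d) ↔
      ∀ v : Vertex d, ¬ v.IsMutable → s v = t v := by
    simp only [mem_span_mutableVectors_iff, Pi.sub_apply, sub_eq_zero, eq_comm]
  constructor
  · intro h
    by_cases hs : Movable (gridForm d) (mutableVectors d) s
    · exact .inr ⟨hs, h.movable_iff.1 hs, hspan.1 h.sub_mem_span,
        h.apply_eq fun _ => apply_eq_one_of_mem_mutableVectors⟩
    · exact .inl (h.eq_of_not_movable hs).symm
  · rintro (rfl | ⟨hs, ht, hst, hQ⟩)
    · exact .refl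
    · exact orbitsMaximal_gridForm hd (hspan.2 hst) hQ hs ht

lemma exists_movable_eq_of_not_isMutable (hd : 6 ≤ d) (s : Vertex d → ZMod 2) (q : ZMod 2) :
    ∃ t, Movable (gridForm d) (mutableVectors d) t ∧
      (∀ v : Vertex d, ¬ v.IsMutable → t v = s v) ∧ gridForm d t = q := by
  obtain ⟨y, hy, -, hq, hmov, -⟩ := (isE6Frame_vertexE6 hd).exists_mem_span_movable s 0 q
  refine ⟨s + y, hmov.mono (range_vertexE6_subset hd), fun v hv => ?_, hq⟩
  have := mem_span_mutableVectors_iff.1 (Submodule.span_mono (range_vertexE6_subset hd) hy) v hv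
  rw [Pi.add_apply, this, add_zero]

end Grid

/-! ### Inversion on sign patterns -/

section InversionPattern

open Function QuadraticMap Relation

lemma sum_product_self_eq_sum_diag {ι R : Type*} [Ring R] [CharP R 2]
    (s : Finset ι) {f : ι → ι → R} (hf : ∀ i j, f i j = f j i) :
    ∑ p ∈ s ×ˢ s, f p.1 p.2 = ∑ i ∈ s, f i i := by
  classical
  have hoff : ∑ p ∈ s.offDiag, f p.1 p.2 = 0 :=
    Finset.sum_involution (fun p _ => p.swap)
      (fun p _ => by rw [Prod.fst_swap, Prod.snd_swap, hf p.2, CharTwo.add_self_eq_zero])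
      (fun p hp _ h => (Finset.mem_offDiag.1 hp).2.2 (Prod.ext_iff.1 h).2)
      (fun p hp => by
        obtain ⟨h₁, h₂, hne⟩ := Finset.mem_offDiag.1 hp
        exact Finset.mem_offDiag.2 ⟨h₂, h₁, hne.symm⟩) fun p _ => p.swap_swap
  rw [← Finset.diag_union_offDiag, Finset.sum_union (Finset.disjoint_diag_offDiag s), hoff,
    add_zero, Finset.sum_diag]

variable {d : ℕ} {s t : Vertex d → ZMod 2} {v : Vertex d}

/-- The reflection of the grid that corresponds to passing to complementary minors. -/
def Vertex.transpose (v : Vertex d) : Vertex d :=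
  ⟨v.col, v.row, v.col_pos, v.row_pos, by rw [add_comm]; exact v.row_add_col_le⟩

@[simp]
lemma Vertex.transpose_transpose (v : Vertex d) : v.transpose.transpose = v := rfl

lemma Vertex.isMutable_transpose : v.transpose.IsMutable ↔ v.IsMutable := by
  simp [Vertex.IsMutable, Vertex.transpose, add_comm]

variable (d) in
/-- The parities of the products `row * col`: the signs by which the minors of an inverse matrix
differ from the complementary minors. -/
def complementSign (v : Vertex d) : ZMod 2 := v.row * v.col

/-- The effect of matrix inversion on the signs of the minors. -/
def invPattern (s : Vertex d → ZMod 2) : Vertex d → ZMod 2 :=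
  s ∘ Vertex.transpose + complementSign d

/-- The values on the hypotenuse of the grid are symmetric. -/
def IsPalindromic (s : Vertex d → ZMod 2) : Prop :=
  ∀ v : Vertex d, ¬ v.IsMutable → s v.transpose = s v

lemma entry_comp_transpose (s : Vertex d → ZMod 2) (k j : ℕ) :
    entry d k j (s ∘ Vertex.transpose) = entry d j k s := by
  simp only [entry, add_comm k j, and_left_comm (a := 0 < k)]
  split_ifs <;> rfl

lemma entry_complementSign (k j : ℕ) :
    entry d k j (complementSign d) = if k + j ≤ d then (k * j : ZMod 2) else 0 := by
  rw [entry]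
  split_ifs with h h' h'
  · rfl
  · omega
  · obtain rfl | rfl : k = 0 ∨ j = 0 := by omega
    all_goals simp
  · rfl

lemma gridForm_comp_transpose (s : Vertex d → ZMod 2) :
    gridForm d (s ∘ Vertex.transpose) = gridForm d s := by
  simp only [gridForm_apply, entry_comp_transpose]
  refine Finset.sum_equiv (Equiv.prodComm ℕ ℕ) (by simp [and_comm]) fun p _ => ?_
  simp only [Equiv.prodComm_apply, Prod.fst_swap, Prod.snd_swap]
  ring

lemma neighbourSum_comp_transpose (s : Vertex d → ZMod 2) (v : Vertex d) :
    neighbourSum (s ∘ Vertex.transpose) v = neighbourSum s v.transpose := by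
  simp only [neighbourSum, entry_comp_transpose, Vertex.transpose]
  ring

lemma neighbourSum_complementSign_of_isMutable (hv : v.IsMutable) :
    neighbourSum (complementSign d) v = 0 := by
  obtain ⟨k, j, hk, hj, _⟩ := v
  obtain ⟨k, rfl⟩ := Nat.exists_eq_succ_of_ne_zero hk.ne'
  obtain ⟨j, rfl⟩ := Nat.exists_eq_succ_of_ne_zero hj.ne'
  have hkj : k + 1 + (j + 1) < d := hv
  simp only [neighbourSum, entry_complementSign, Nat.succ_eq_add_one, Nat.add_sub_cancel]
  simp only [show k + 1 + 1 + (j + 1) ≤ d by omega, show k + 1 + j ≤ d by omega,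
    show k + (j + 1 + 1) ≤ d by omega, show k + 1 + (j + 1 + 1) ≤ d by omega,
    show k + (j + 1) ≤ d by omega, show k + 1 + 1 + j ≤ d by omega, if_true]
  push_cast
  generalize (k : ZMod 2) = a
  generalize (j : ZMod 2) = b
  revert a b
  decide

lemma neighbourSum_complementSign_of_not_isMutable (hd : Odd d) (hv : ¬ v.IsMutable) :
    neighbourSum (complementSign d) v = 1 := by
  obtain ⟨k, j, hk, hj, hkj⟩ := v
  obtain ⟨k, rfl⟩ := Nat.exists_eq_succ_of_ne_zero hk.ne'
  obtain ⟨j, rfl⟩ := Nat.exists_eq_succ_of_ne_zero hj.ne'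
  obtain rfl : k + 1 + (j + 1) = d := by
    simpa [Vertex.isMutable_iff] using hv
  have hd' := ZMod.natCast_eq_one_iff_odd.2 hd
  simp only [neighbourSum, entry_complementSign, Nat.succ_eq_add_one, Nat.add_sub_cancel]
  simp only [show ¬ k + 1 + 1 + (j + 1) ≤ k + 1 + (j + 1) by omega,
    show k + 1 + j ≤ k + 1 + (j + 1) by omega, show k + (j + 1 + 1) ≤ k + 1 + (j + 1) by omega,
    show ¬ k + 1 + (j + 1 + 1) ≤ k + 1 + (j + 1) by omega,
    show k + (j + 1) ≤ k + 1 + (j + 1) by omega,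
    show k + 1 + 1 + j ≤ k + 1 + (j + 1) by omega, if_true, if_false]
  push_cast at hd' ⊢
  revert hd'
  generalize (k : ZMod 2) = a
  generalize (j : ZMod 2) = b
  revert a b
  decide

lemma neighbourSum_add (s t : Vertex d → ZMod 2) (v : Vertex d) :
    neighbourSum (s + t) v = neighbourSum s v + neighbourSum t v := by
  simp only [← polar_gridForm_single, polar_add_left]

lemma polar_gridForm_eq_sum (s t : Vertex d → ZMod 2) :
    polar (gridForm d) s t = ∑ v, t v * neighbourSum s v := by
  conv_lhs => rw [← Finset.univ_sum_single t, ← polarBilin_apply_apply, map_sum]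
  refine Finset.sum_congr rfl fun v _ => ?_
  rw [← mul_one (t v), ← smul_eq_mul, Pi.single_smul, map_smul, polarBilin_apply_apply,
    polar_gridForm_single, smul_eq_mul, smul_eq_mul, mul_one]

lemma polar_gridForm_complementSign (hd : Odd d) (hs : IsPalindromic s) :
    polar (gridForm d) (complementSign d) s = 0 := by
  classical
  rw [polar_gridForm_eq_sum, ← Finset.sum_filter_of_ne (p := fun v : Vertex d => ¬ v.IsMutable)
    fun v _ hne hv => hne (by rw [neighbourSum_complementSign_of_isMutable hv, mul_zero])]
  refine Finset.sum_involution (fun v _ => v.transpose) (fun v hv => ?_) (fun v hv _ h => ?_)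
    (fun v hv => ?_) fun v _ => v.transpose_transpose
  all_goals replace hv : ¬ v.IsMutable := (Finset.mem_filter.1 hv).2
  · rw [hs v hv, neighbourSum_complementSign_of_not_isMutable hd hv,
      neighbourSum_complementSign_of_not_isMutable hd (mt Vertex.isMutable_transpose.1 hv),
      CharTwo.add_self_eq_zero]
  · have hrow : v.col = v.row := congrArg Vertex.row h
    rw [Vertex.isMutable_iff, not_not, hrow] at hv
    exact Nat.not_even_iff_odd.2 hd ⟨_, hv.symm⟩
  · simpa [Vertex.isMutable_transpose] using hv

-- Modulo `2`, only the diagonal survives in the symmetric sum of the `k * j` over `k + j ≤ d`.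
lemma gridForm_complementSign (d : ℕ) :
    gridForm d (complementSign d) = ((d / 2 + 1).choose 2 : ℕ) := by
  have hterm (k j : ℕ) : entry d k j (complementSign d)
      + entry d k j (complementSign d) * entry d (k + 1) j (complementSign d)
      + entry d k j (complementSign d) * entry d k (j + 1) (complementSign d)
      + entry d (k + 1) j (complementSign d) * entry d k (j + 1) (complementSign d)
      = if k + j ≤ d then (k * j : ZMod 2) else 0 := by
    simp only [entry_complementSign]
    push_cast
    generalize (k : ZMod 2) = a
    generalize (j : ZMod 2) = b
    split_ifs <;> revert a b <;> decide
  have hfilter : {k ∈ Finset.range (d + 1) | k + k ≤ d} = Finset.range (d / 2 + 1) := by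
    ext k
    simp only [Finset.mem_filter, Finset.mem_range]
    omega
  have hsq (x : ZMod 2) : x * x = x := by revert x; decide
  simp only [gridForm_apply, hterm]
  rw [sum_product_self_eq_sum_diag (f := fun k j => if k + j ≤ d then (k * j : ZMod 2) else 0) _
    fun k j => by simp only [add_comm, mul_comm], ← Finset.sum_filter, hfilter]
  simp only [hsq]
  rw [← Nat.cast_sum, Finset.sum_range_id, Nat.choose_two_right]

lemma even_choose_half_succ_two (h8 : d % 8 = 1 ∨ d % 8 = 7) : Even ((d / 2 + 1).choose 2) := by
  rw [Nat.choose_two_right, Nat.add_sub_cancel]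
  obtain h | h := h8
  · obtain ⟨m, hm⟩ : ∃ m, d / 2 = 4 * m := ⟨d / 8, by omega⟩
    exact ⟨(4 * m + 1) * m, by rw [hm]; exact Nat.div_eq_of_eq_mul_left two_pos (by ring)⟩
  · obtain ⟨m, hm⟩ : ∃ m, d / 2 = 4 * m + 3 := ⟨d / 8, by omega⟩
    exact ⟨(m + 1) * (4 * m + 3), by rw [hm]; exact Nat.div_eq_of_eq_mul_left two_pos (by ring)⟩

lemma gridForm_invPattern (hd : Odd d) (h8 : d % 8 = 1 ∨ d % 8 = 7) (hs : IsPalindromic s) :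
    gridForm d (invPattern s) = gridForm d s := by
  have hs' : IsPalindromic (s ∘ Vertex.transpose) := fun v hv => (hs v hv).symm
  rw [invPattern, QuadraticMap.map_add (gridForm d), gridForm_comp_transpose,
    gridForm_complementSign, ZMod.natCast_eq_zero_iff_even.2 (even_choose_half_succ_two h8),
    polar_comm, polar_gridForm_complementSign hd hs', add_zero, add_zero]

lemma movable_mutableVectors_iff : Movable (gridForm d) (mutableVectors d) s ↔
    ∃ v : Vertex d, v.IsMutable ∧ neighbourSum s v ≠ 0 := by
  simp [Movable, mutableVectors, polar_gridForm_single]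

lemma Movable.invPattern (h : Movable (gridForm d) (mutableVectors d) s) :
    Movable (gridForm d) (mutableVectors d) (invPattern s) := by
  obtain ⟨v, hv, hne⟩ := movable_mutableVectors_iff.1 h
  refine movable_mutableVectors_iff.2 ⟨v.transpose, Vertex.isMutable_transpose.2 hv, ?_⟩
  rwa [UnipotentCells.invPattern, neighbourSum_add, neighbourSum_comp_transpose,
    v.transpose_transpose, neighbourSum_complementSign_of_isMutable
    (Vertex.isMutable_transpose.2 hv), add_zero]

lemma complementSign_of_not_isMutable (hd : Odd d) (hv : ¬ v.IsMutable) :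
    complementSign d v = 0 := by
  rw [Vertex.isMutable_iff, not_not] at hv
  rw [complementSign, ← Nat.cast_mul, ZMod.natCast_eq_zero_iff_even, Nat.even_mul]
  rw [← hv, Nat.odd_add] at hd
  by_cases h : Odd v.row
  · exact .inr (hd.1 h)
  · exact .inl (Nat.not_odd_iff_even.1 h)

lemma isPalindromic_iff_eq_invPattern (hd : Odd d) :
    IsPalindromic s ↔ ∀ v : Vertex d, ¬ v.IsMutable → s v = invPattern s v := by
  refine forall₂_congr fun v hv => ?_
  rw [invPattern, Pi.add_apply, complementSign_of_not_isMutable hd hv, add_zero, comp_apply,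
    eq_comm]

lemma ne_invPattern (hd : 2 ≤ d) (s : Vertex d → ZMod 2) : s ≠ invPattern s := fun h => by
  have h11 := congrFun h ⟨1, 1, one_pos, one_pos, hd⟩
  simp [invPattern, complementSign, Vertex.transpose] at h11

theorem sameOrbit_invPattern_iff (hd : 6 ≤ d) (hodd : Odd d) (h8 : d % 8 = 1 ∨ d % 8 = 7) :
    SameOrbit (gridForm d) (mutableVectors d) s (invPattern s) ↔
      Movable (gridForm d) (mutableVectors d) s ∧ IsPalindromic s := by
  rw [sameOrbit_mutableVectors_iff hd, or_iff_right (ne_invPattern (by omega) s),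
    ← isPalindromic_iff_eq_invPattern hodd]
  exact ⟨fun h => ⟨h.1, h.2.2.1⟩,
    fun h => ⟨h.1, h.1.invPattern, h.2, (gridForm_invPattern hodd h8 h.2).symm⟩⟩

end InversionPattern

/-! ### Minors with initial rows -/

section Minors

open Matrix

variable {R : Type*} [CommRing R]

/-- The square submatrix of an infinite array formed by its first `k` rows and the `k` consecutive
columns starting at `j`. -/
def window (a : ℕ → ℕ → R) (k j : ℕ) : Matrix (Fin k) (Fin k) R :=
  of fun r c => a r (j + c)

/-- The minor of an array formed by its first `k` rows and the `k` columns starting at `j`. -/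
def topMinor (a : ℕ → ℕ → R) (k j : ℕ) : R := (window a k j).det

variable {a b : ℕ → ℕ → R} {k j n i : ℕ}

lemma topMinor_zero (a : ℕ → ℕ → R) (j : ℕ) : topMinor a 0 j = 1 := det_fin_zero

lemma topMinor_zero_right (hlower : ∀ r c, c < r → a r c = 0) (hdiag : ∀ r < k, a r r = 1) :
    topMinor a k 0 = 1 := by
  rw [topMinor, det_of_isUpperTriangular]
  · exact Finset.prod_eq_one fun r _ => by simp [window, hdiag r r.2]
  · intro r c h
    simpa [window] using hlower r c h

lemma topMinor_congr (h : ∀ r c, r < k → j ≤ c → c < j + k → a r c = b r c) :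
    topMinor a k j = topMinor b k j := by
  rw [topMinor, topMinor]
  congr 1
  ext r c
  exact h _ _ r.2 (by omega) (by omega)

lemma adjugate_window_last_last (a : ℕ → ℕ → R) (n j : ℕ) :
    adjugate (window a (n + 1) j) (Fin.last n) (Fin.last n) = topMinor a n j := by
  rw [adjugate_fin_succ_eq_det_submatrix, Even.neg_one_pow ⟨_, rfl⟩, one_mul, topMinor]
  congr 1
  ext r c
  simp [window]

lemma adjugate_window_zero_last (a : ℕ → ℕ → R) (n j : ℕ) :
    adjugate (window a (n + 1) j) 0 (Fin.last n) = (-1) ^ n * topMinor a n (j + 1) := by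
  rw [adjugate_fin_succ_eq_det_submatrix, Fin.val_last, Fin.val_zero, add_zero, topMinor]
  congr 2
  ext r c
  simp [window, add_assoc, add_comm 1]

lemma topMinor_succ_of_eq_off_corner
    (h : ∀ r c, r ≤ n → j ≤ c → c ≤ j + n → (r ≠ n ∨ c ≠ j + n) → a r c = b r c) :
    topMinor b (n + 1) j =
      topMinor a (n + 1) j + (b n (j + n) - a n (j + n)) * topMinor a n j := by
  have hb : window b (n + 1) j = (window a (n + 1) j).updateRow (Fin.last n)
      (window a (n + 1) j (Fin.last n) +
        (b n (j + n) - a n (j + n)) • Pi.single (Fin.last n) 1) := by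
    ext r c
    by_cases hr : r = Fin.last n
    · subst hr
      by_cases hc : c = Fin.last n
      · subst hc
        simp [window]
      · have := h n (j + c) le_rfl (by omega) (by omega) (.inr (by simpa [Fin.ext_iff] using hc))
        simp [window, hc, this]
    · have := h r (j + c) (by omega) (by omega) (by omega) (.inl (by simpa [Fin.ext_iff] using hr))
      simp [window, hr, this]
  rw [topMinor, hb, det_updateRow_add, updateRow_eq_self, det_updateRow_smul, ← adjugate_apply,
    adjugate_window_last_last, ← topMinor]

lemma adjugate_mul_eq_det_mul {m : Type*} [Fintype m] [DecidableEq m] {M : Matrix m m R}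
    {v : m → R} {i : m} {γ : R} (h : M *ᵥ v = Pi.single i γ) (c : m) :
    adjugate M c i * γ = M.det * v c := by
  have hadj := congrFun (congrArg (adjugate M *ᵥ ·) h) c
  simpa [mulVec_mulVec, adjugate_mul, smul_mulVec] using hadj.symm

-- If the minor `(n + 1, i + 1)` vanishes, the last column of its adjugate spans a linear relation
-- between the columns `i + 1, …, i + n + 1` of the first `n + 1` rows; feeding that relation to the
-- two windows of order `n + 2` that contain these columns compares both with the same scalar.
lemma topMinor_exchange (h0 : topMinor a (n + 1) (i + 1) = 0) :
    topMinor a (n + 2) (i + 1) * topMinor a (n + 1) i * topMinor a n (i + 2) =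
      -(topMinor a (n + 1) (i + 2) * topMinor a n (i + 1) * topMinor a (n + 2) i) := by
  set v : Fin (n + 1) → R := fun t => adjugate (window a (n + 1) (i + 1)) t (Fin.last n)
  set γ : R := ∑ t : Fin (n + 1), a (n + 1) (i + 1 + t) * v t with hγ
  have hrel : ∀ r : Fin (n + 2), ∑ t : Fin (n + 1), a r (i + 1 + t) * v t =
      (Pi.single (Fin.last (n + 1)) γ : Fin (n + 2) → R) r := by
    refine Fin.lastCases (by simp [hγ]) fun r => ?_
    have hr := congrFun (congrFun (mul_adjugate (window a (n + 1) (i + 1))) r) (Fin.last n)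
    rw [← topMinor, h0, zero_smul, mul_apply] at hr
    rw [Pi.single_eq_of_ne (Fin.castSucc_lt_last r).ne]
    exact hr
  have hleft : window a (n + 2) i *ᵥ Fin.cons 0 v = Pi.single (Fin.last (n + 1)) γ := by
    ext r
    rw [← hrel r, mulVec, dotProduct, Fin.sum_univ_succ]
    simp [window, add_assoc, add_comm 1]
  have hright : window a (n + 2) (i + 1) *ᵥ Fin.snoc v 0 = Pi.single (Fin.last (n + 1)) γ := by
    ext r
    rw [← hrel r, mulVec, dotProduct, Fin.sum_univ_castSucc]
    simp [window]
  have hlast := adjugate_mul_eq_det_mul hleft (Fin.last (n + 1))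
  have hfirst := adjugate_mul_eq_det_mul hright 0
  rw [adjugate_window_last_last, ← Fin.succ_last, Fin.cons_succ,
    show v (Fin.last n) = _ from adjugate_window_last_last .., ← topMinor] at hlast
  rw [adjugate_window_zero_last, ← Fin.castSucc_zero, Fin.snoc_castSucc,
    show v 0 = _ from adjugate_window_zero_last .., ← topMinor] at hfirst
  have hsign : (-1 : R) ^ n * (-1) ^ n = 1 := by rw [← mul_pow, neg_one_mul, neg_neg, one_pow]
  have hfirst' : topMinor a (n + 2) (i + 1) * topMinor a n (i + 2) =
      -(topMinor a (n + 1) (i + 2) * γ) := by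
    rw [pow_succ] at hfirst
    linear_combination (-(-1) ^ n) * hfirst -
      (topMinor a (n + 2) (i + 1) * topMinor a n (i + 2) + topMinor a (n + 1) (i + 2) * γ) * hsign
  linear_combination topMinor a (n + 1) i * hfirst' - topMinor a (n + 1) (i + 2) * hlast

lemma det_mul_det_toBlocks₁₁ {m n : Type*} [Fintype m] [Fintype n] [DecidableEq m] [DecidableEq n]
    {A B : Matrix (m ⊕ n) (m ⊕ n) R} (h : A * B = 1) :
    A.det * B.toBlocks₁₁.det = A.toBlocks₂₂.det := by
  have hprod : A * fromBlocks B.toBlocks₁₁ 0 B.toBlocks₂₁ 1 =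
      fromBlocks 1 A.toBlocks₁₂ 0 A.toBlocks₂₂ := by
    rw [← fromBlocks_toBlocks A, ← fromBlocks_toBlocks B, fromBlocks_multiply, ← fromBlocks_one,
      fromBlocks_inj] at h
    conv_lhs => rw [← fromBlocks_toBlocks A, fromBlocks_multiply, h.1, h.2.2.1]
    simp
  have hdet := congrArg det hprod
  rwa [det_mul, det_fromBlocks_zero₁₂, det_fromBlocks_zero₂₁, det_one, det_one, mul_one,
    one_mul] at hdet

/-- The bijection of `Fin k ⊕ Fin j` with `Fin (k + j)` that puts the second summand first. -/
def sumFinSwapEquiv (k j : ℕ) : Fin k ⊕ Fin j ≃ Fin (k + j) :=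
  (Equiv.sumComm _ _).trans (finSumFinEquiv.trans (finCongr (add_comm j k)))

lemma val_finRotate_pow (n j : ℕ) (x : Fin n) : ((finRotate n ^ j) x : ℕ) = (x + j) % n := by
  obtain _ | n := n
  · exact x.elim0
  induction j with
  | zero => simp [Nat.mod_eq_of_lt x.2]
  | succ j ih =>
    rw [pow_succ', Equiv.Perm.mul_apply, finRotate_apply, Fin.val_add, ih]
    simp only [Fin.val_one', Nat.add_mod_mod, Nat.mod_add_mod, add_assoc]

lemma finSumFinEquiv_symm_trans_sumFinSwapEquiv (k j : ℕ) :
    finSumFinEquiv.symm.trans (sumFinSwapEquiv k j) = finRotate (k + j) ^ j := by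
  refine Equiv.ext (finSumFinEquiv.surjective.forall.2 fun x => Fin.ext ?_)
  obtain i | i := x
  · rw [Equiv.trans_apply, val_finRotate_pow, Nat.mod_eq_of_lt (by simp)]
    simp [sumFinSwapEquiv, add_comm]
  · rw [Equiv.trans_apply, val_finRotate_pow]
    simp [sumFinSwapEquiv, add_comm k, add_assoc, Nat.mod_eq_of_lt (by omega : (i : ℕ) < j + k)]

lemma sign_sumFinSwapEquiv (k j : ℕ) :
    Equiv.Perm.sign (finSumFinEquiv.symm.trans (sumFinSwapEquiv k j)) = (-1) ^ (k * j) := by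
  rw [finSumFinEquiv_symm_trans_sumFinSwapEquiv, map_pow, sign_finRotate, ← pow_mul]
  obtain _ | j := j
  · simp
  · rw [← add_assoc, Nat.add_sub_cancel, add_mul, pow_add, (Nat.even_mul_succ_self j).neg_one_pow,
      mul_one]

lemma topMinor_mul_topMinor_of_window_mul_eq_one (h : window a (k + j) 0 * window b (k + j) 0 = 1) :
    topMinor a (k + j) 0 * topMinor b k j = (-1) ^ (k * j) * topMinor a j k := by
  set e : Fin k ⊕ Fin j ≃ Fin (k + j) := finSumFinEquiv
  set f : Fin k ⊕ Fin j ≃ Fin (k + j) := sumFinSwapEquiv k j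
  have hsubmatrix : (window a (k + j) 0).submatrix f e =
      ((window a (k + j) 0).submatrix (e.symm.trans f) id).submatrix e e := by
    ext
    simp
  have hdet : ((window a (k + j) 0).submatrix f e).det = (-1) ^ (k * j) * topMinor a (k + j) 0 := by
    rw [hsubmatrix, det_submatrix_equiv_self, det_permute, sign_sumFinSwapEquiv, topMinor]
    simp
  have hone : (window a (k + j) 0).submatrix f e * (window b (k + j) 0).submatrix e f = 1 := by
    rw [submatrix_mul_equiv, h, submatrix_one_equiv]
  have hblock := det_mul_det_toBlocks₁₁ hone
  have ha : ((window a (k + j) 0).submatrix f e).toBlocks₂₂ = window a j k := by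
    ext r c
    simp [e, f, window, sumFinSwapEquiv, toBlocks₂₂]
  have hb : ((window b (k + j) 0).submatrix e f).toBlocks₁₁ = window b k j := by
    ext r c
    simp [e, f, window, sumFinSwapEquiv, toBlocks₁₁, add_comm]
  rw [hdet, ha, hb, ← topMinor, ← topMinor] at hblock
  rw [← hblock, ← mul_assoc, ← mul_assoc, ← mul_pow, neg_one_mul, neg_neg, one_pow, one_mul]

end Minors

/-! ### Triangular families of functions -/

section TriangularFamilies

open Filter MeasureTheory Set Topology

section LocallyRelated

variable {X : Type*} [TopologicalSpace X] {R : X → X → Prop} {T K : Set X}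

/-- Any two points of `T` close enough to `p` are related by `R`. The point `p` itself need not
belong to `T`. -/
def LocallyRelated (R : X → X → Prop) (T : Set X) (p : X) : Prop :=
  ∃ W ∈ 𝓝[T] p, ∀ x ∈ W, ∀ y ∈ W, R x y

lemma rel_of_isPreconnected (hK : IsPreconnected K) (hT : Dense T)
    (htrans : ∀ {x y z}, R x y → R y z → R x z) (hloc : ∀ p ∈ K, LocallyRelated R T p) {x y : X}
    (hx : x ∈ K) (hxT : x ∈ T) (hy : y ∈ K) (hyT : y ∈ T) : R x y := by
  have hclose : ∀ᶠ x' in 𝓝[T] x, ∀ᶠ y' in 𝓝[T] y, R x' y' := by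
    refine hK.induction₂' (fun p q => ∀ᶠ x' in 𝓝[T] p, ∀ᶠ y' in 𝓝[T] q, R x' y')
      (fun p hp => ?_) (fun p q r _ _ _ hpq hqr => ?_) hx hy
    · obtain ⟨W, hW, hR⟩ := hloc p hp
      filter_upwards [nhdsWithin_le_nhds (eventually_nhds_nhdsWithin.2 hW)] with q hq
      exact ⟨by filter_upwards [hW] with x' hx' using by filter_upwards [hq] using hR x' hx',
        by filter_upwards [hq] with x' hx' using by filter_upwards [hW] using hR x' hx'⟩
    · have : (𝓝[T] q).NeBot := mem_closure_iff_nhdsWithin_neBot.1 (hT q)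
      filter_upwards [hpq] with x' hx'
      obtain ⟨y', hxy, hyz⟩ := (hx'.and hqr).exists
      filter_upwards [hyz] with z' hz' using htrans hxy hz'
  exact (hclose.self_of_nhdsWithin hxT).self_of_nhdsWithin hyT

end LocallyRelated

lemma addHaar_image_eq_zero_of_add_smul {E : Type*} [NormedAddCommGroup E] [NormedSpace ℝ E]
    [FiniteDimensional ℝ E] [MeasurableSpace E] [BorelSpace E] (μ : Measure E) [μ.IsAddHaarMeasure]
    {F : E → E} {O : Set E} {v : E} (hv : v ≠ 0) (hF : ∀ w ∈ O, DifferentiableAt ℝ F w)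
    (hFv : ∀ w ∈ O, ∀ t : ℝ, F (w + t • v) = F w) : μ (F '' O) = 0 := by
  refine addHaar_image_eq_zero_of_det_fderivWithin_eq_zero (f' := fderiv ℝ F) μ
    (fun w hw => (hF w hw).hasFDerivAt.hasFDerivWithinAt) fun w hw => ?_
  have hline : HasDerivAt (fun t : ℝ => F (w + t • v)) (fderiv ℝ F w v) 0 :=
    (hF w hw).hasFDerivAt.hasLineDerivAt v
  rw [funext (hFv w hw)] at hline
  have hker : v ∈ LinearMap.ker (fderiv ℝ F w : E →ₗ[ℝ] E) := hline.unique (hasDerivAt_const _ _)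
  exact LinearMap.det_eq_zero_iff_ker_ne_bot.2 fun hbot =>
    hv ((Submodule.mem_bot ℝ).1 (hbot ▸ hker))

lemma exists_forall_of_update {ι α : Type*} [LinearOrder ι] [Finite ι] [Nonempty α]
    {P : ι → (ι → α) → Prop} (hcongr : ∀ i x y, (∀ j ≤ i, x j = y j) → P i x → P i y)
    (hstep : ∀ i x, (∀ j < i, P j x) → ∃ t, P i (Function.update x i t)) : ∃ x, ∀ i, P i x := by
  have := Fintype.ofFinite ι
  suffices H : ∀ s : Finset ι, IsLowerSet (s : Set ι) → ∃ x, ∀ i ∈ s, P i x by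
    simpa using H Finset.univ (by simpa using isLowerSet_univ)
  intro s
  induction s using Finset.induction_on_max with
  | empty => exact fun _ => ⟨Classical.arbitrary _, by simp⟩
  | insert a s hmax ih =>
    intro hlower
    have hmem : ∀ j, j < a → j ∈ s := fun j hj =>
      (Finset.mem_insert.1 (hlower hj.le (Finset.mem_insert_self a s))).resolve_left hj.ne
    obtain ⟨x, hx⟩ := ih fun i j hji hi => hmem j (hji.trans_lt (hmax i hi))
    obtain ⟨t, ht⟩ := hstep a x fun j hj => hx j (hmem j hj)
    refine ⟨Function.update x a t, Finset.forall_mem_insert .. |>.2 ⟨ht, fun i hi => ?_⟩⟩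
    exact hcongr i x _ (fun j hj => (Function.update_of_ne (hj.trans_lt (hmax i hi)).ne _ _).symm)
      (hx i hi)

/-- The functions `f i` are affine with slope `g i` in the coordinate `x i`, do not depend on the
later coordinates, and have nonzero slope wherever the earlier functions do not vanish. -/
structure IsTriangular {ι : Type*} [LinearOrder ι] (f g : ι → (ι → ℝ) → ℝ) : Prop where
  eq_add : ∀ i x y, (∀ j < i, x j = y j) → f i y = f i x + (y i - x i) * g i x
  slope_congr : ∀ i x y, (∀ j < i, x j = y j) → g i x = g i y
  slope_ne_zero : ∀ i x, (∀ j < i, f j x ≠ 0) → g i x ≠ 0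
  differentiable : ∀ i, Differentiable ℝ (f i)
  differentiable_slope : ∀ i, Differentiable ℝ (g i)

/-- The points at which no function of the family vanishes. -/
def nonvanishingSet {ι X : Type*} (f : ι → X → ℝ) : Set X := {x | ∀ i, f i x ≠ 0}

/-- The sign of a real number as an element of `ZMod 2`; it is only meaningful for `r ≠ 0`. -/
noncomputable def signBit (r : ℝ) : ZMod 2 := if r < 0 then 1 else 0

/-- The signs of the values of a family of functions. -/
noncomputable def signPattern {ι X : Type*} (f : ι → X → ℝ) (x : X) (i : ι) : ZMod 2 :=
  signBit (f i x)

/-- The common zeros of `f a` and `f b` at which both slopes are nonzero. -/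
def doubleZeros {ι : Type*} (f g : ι → (ι → ℝ) → ℝ) (a b : ι) : Set (ι → ℝ) :=
  {q | f a q = 0 ∧ f b q = 0 ∧ g a q ≠ 0 ∧ g b q ≠ 0}

section signBit

lemma signBit_of_pos {r : ℝ} (hr : 0 < r) : signBit r = 0 := if_neg hr.not_gt

lemma signBit_of_neg {r : ℝ} (hr : r < 0) : signBit r = 1 := if_pos hr

lemma signBit_neg {r : ℝ} (hr : r ≠ 0) : signBit (-r) = signBit r + 1 := by
  rcases hr.lt_or_gt with h | h
  · rw [signBit_of_neg h, signBit_of_pos (neg_pos.2 h), CharTwo.add_self_eq_zero]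
  · rw [signBit_of_pos h, signBit_of_neg (neg_lt_zero.2 h), zero_add]

lemma signBit_mul {r r' : ℝ} (hr : r ≠ 0) (hr' : r' ≠ 0) :
    signBit (r * r') = signBit r + signBit r' := by
  rcases hr.lt_or_gt with h | h <;> rcases hr'.lt_or_gt with h' | h'
  · simp [signBit_of_neg, signBit_of_pos, h, h', mul_pos_of_neg_of_neg, CharTwo.add_self_eq_zero]
  · simp [signBit_of_neg, signBit_of_pos, h, h', mul_neg_of_neg_of_pos]
  · simp [signBit_of_neg, signBit_of_pos, h, h', mul_neg_of_pos_of_neg]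
  · simp [signBit_of_pos, h, h']

lemma signBit_eq_zero_iff {r : ℝ} : signBit r = 0 ↔ 0 ≤ r := by simp [signBit]

lemma signBit_eq_one_iff {r : ℝ} : signBit r = 1 ↔ r < 0 := by simp [signBit]

lemma eventually_signBit_eq {X : Type*} [TopologicalSpace X] {F : X → ℝ} {p : X}
    (hF : ContinuousAt F p) (hp : F p ≠ 0) :
    ∀ᶠ x in 𝓝 p, signBit (F x) = signBit (F p) := by
  rcases hp.lt_or_gt with h | h
  · filter_upwards [hF.eventually_lt_const h] with x hx
    rw [signBit_of_neg hx, signBit_of_neg h]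
  · filter_upwards [hF.eventually_const_lt h] with x hx
    rw [signBit_of_pos hx, signBit_of_pos h]

lemma isConnected_setOf_signBit_eq (c : ZMod 2) : IsConnected {r : ℝ | r ≠ 0 ∧ signBit r = c} := by
  obtain rfl | rfl : c = 0 ∨ c = 1 := by revert c; decide
  · convert isConnected_Ioi (a := (0 : ℝ)) using 1
    ext r
    rw [mem_ofPred_eq, signBit_eq_zero_iff, mem_Ioi, lt_iff_le_and_ne, ne_comm, and_comm]
  · convert isConnected_Iio (a := (0 : ℝ)) using 1
    ext r
    rw [mem_ofPred_eq, signBit_eq_one_iff, mem_Iio, and_iff_right_of_imp LT.lt.ne]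

end signBit

section project

variable {ι : Type*} [DecidableEq ι] {f g : ι → (ι → ℝ) → ℝ} {a : ι} {u : ι → ℝ}

/-- The translate of `u` in the direction of the coordinate `a` on which `f a` vanishes, if `f a` is
affine with slope `g a ≠ 0` in that direction. -/
noncomputable def project (f g : ι → (ι → ℝ) → ℝ) (a : ι) (u : ι → ℝ) : ι → ℝ :=
  u - (f a u / g a u) • Pi.single a 1

lemma project_of_eq_zero (hu : f a u = 0) : project f g a u = u := by
  rw [project, hu, zero_div, zero_smul, sub_zero]

end project

namespace IsTriangular

variable {ι : Type*} [LinearOrder ι] {f g : ι → (ι → ℝ) → ℝ} {i j a b : ι} {x y u : ι → ℝ}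

lemma congr (h : IsTriangular f g) (hxy : ∀ j ≤ i, x j = y j) : f i x = f i y := by
  rw [h.eq_add i x y fun j hj => hxy j hj.le, hxy i le_rfl, sub_self, zero_mul, add_zero]

lemma add_smul_single (h : IsTriangular f g) (x : ι → ℝ) (i : ι) (t : ℝ) :
    f i (x + t • Pi.single i 1) = f i x + t * g i x := by
  rw [h.eq_add i x _ fun j hj => by simp [hj.ne]]
  simp

lemma add_smul_single_of_lt (h : IsTriangular f g) (x : ι → ℝ) (hij : i < j) (t : ℝ) :
    f i (x + t • Pi.single j 1) = f i x :=
  h.congr fun k hk => by simp [(hk.trans_lt hij).ne]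

lemma slope_add_smul_single (h : IsTriangular f g) (x : ι → ℝ) (hij : i ≤ j) (t : ℝ) :
    g i (x + t • Pi.single j 1) = g i x :=
  h.slope_congr i _ _ fun k hk => by simp [(hk.trans_le hij).ne]

lemma exists_update_eq (h : IsTriangular f g) (hx : g i x ≠ 0) (r : ℝ) :
    ∃ t, f i (Function.update x i t) = r := by
  refine ⟨x i + (r - f i x) / g i x, ?_⟩
  rw [h.eq_add i x _ fun j hj => (Function.update_of_ne hj.ne _ _).symm, Function.update_self,
    add_sub_cancel_left, div_mul_cancel₀ _ hx, add_sub_cancel]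

lemma isOpen_nonvanishingSet [Finite ι] (h : IsTriangular f g) : IsOpen (nonvanishingSet f) := by
  rw [nonvanishingSet, ofPred_forall]
  exact isOpen_iInter_of_finite fun i =>
    isOpen_ne_fun (h.differentiable i).continuous continuous_const

lemma dense_nonvanishingSet [Finite ι] (h : IsTriangular f g) : Dense (nonvanishingSet f) := by
  have := Fintype.ofFinite ι
  refine Metric.dense_iff.2 fun x₀ ε hε => ?_
  obtain ⟨x, hx⟩ := exists_forall_of_update (P := fun i x => f i x ≠ 0 ∧ dist (x i) (x₀ i) < ε)
    (fun i x y hxy hx => by rwa [← h.congr hxy, ← hxy i le_rfl]) fun i x hx => by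
      have hslope := h.slope_ne_zero i x fun j hj => (hx j hj).1
      obtain ⟨t, ht, hdist⟩ :=
        (dense_compl_singleton (x i - f i x / g i x)).exists_dist_lt (x₀ i) hε
      refine ⟨t, fun h0 => ht ?_, by rwa [Function.update_self, dist_comm]⟩
      rw [h.eq_add i x _ fun j hj => (Function.update_of_ne hj.ne _ _).symm,
        Function.update_self] at h0
      rw [mem_singleton_iff]
      field_simp
      linarith
  exact ⟨x, (dist_pi_lt_iff hε).2 fun i => (hx i).2, fun i => (hx i).1⟩

lemma isConnected_setOf_forall_mem [Finite ι] (h : IsTriangular f g) {I : ι → Set ℝ}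
    (hI : ∀ i, IsConnected (I i)) (h0 : ∀ i, (0 : ℝ) ∉ I i) :
    IsConnected {x | ∀ i, f i x ∈ I i} := by
  have := Fintype.ofFinite ι
  suffices H : ∀ s : Finset ι, IsLowerSet (s : Set ι) → IsConnected {x | ∀ i ∈ s, f i x ∈ I i} by
    simpa using H Finset.univ (by simpa using isLowerSet_univ)
  intro s
  induction s using Finset.induction_on_max with
  | empty => simpa using fun _ => isConnected_univ
  | insert a s hmax ih =>
    intro hlower
    have hmem : ∀ j, j < a → j ∈ s := fun j hj =>
      (Finset.mem_insert.1 (hlower hj.le (Finset.mem_insert_self a s))).resolve_left hj.ne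
    have hslope : ∀ x, (∀ i ∈ s, f i x ∈ I i) → g a x ≠ 0 := fun x hx =>
      h.slope_ne_zero a x fun j hj h0' => h0 j (h0' ▸ hx j (hmem j hj))
    -- The value of `f a` can be prescribed by changing the coordinate `x a` only.
    convert ((ih fun i j hji hi => hmem j (hji.trans_lt (hmax i hi))).prod (hI a)).image
      (fun p : (ι → ℝ) × ℝ => p.1 + ((p.2 - f a p.1) / g a p.1) • Pi.single a (1 : ℝ)) ?_
    · ext y
      simp only [mem_ofPred_eq, mem_image, mem_prod, Prod.exists, Finset.forall_mem_insert]
      constructor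
      · exact fun hy => ⟨y, f a y, ⟨hy.2, hy.1⟩, by simp⟩
      · rintro ⟨x, r, ⟨hx, hr⟩, rfl⟩
        refine ⟨?_, fun i hi => ?_⟩
        · rwa [h.add_smul_single, div_mul_cancel₀ _ (hslope x hx), add_sub_cancel]
        · rw [h.add_smul_single_of_lt _ (hmax i hi)]
          exact hx i hi
    · have hf := (h.differentiable a).continuous
      have hg := (h.differentiable_slope a).continuous
      exact continuous_fst.continuousOn.add
        (((continuous_snd.sub (hf.comp continuous_fst)).continuousOn.div
          (hg.comp continuous_fst).continuousOn fun p hp => hslope p.1 hp.1).smul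
            continuousOn_const)

lemma isConnected_setOf_signPattern_eq [Finite ι] (h : IsTriangular f g) (s : ι → ZMod 2) :
    IsConnected {x ∈ nonvanishingSet f | signPattern f x = s} := by
  convert h.isConnected_setOf_forall_mem (fun i => isConnected_setOf_signBit_eq (s i))
    (fun i h0 => h0.1 rfl) using 1
  ext x
  simp [nonvanishingSet, signPattern, funext_iff, forall_and]

lemma eventually_signPattern_eq [Finite ι] (h : IsTriangular f g) (hx : ∀ j ≠ i, f j x ≠ 0) :
    ∀ᶠ y in 𝓝 x, ∀ j ≠ i, f j y ≠ 0 ∧ signPattern f y j = signPattern f x j := by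
  refine eventually_all.2 fun j => eventually_imp_distrib_left.2 fun hj => ?_
  have hcont := (h.differentiable j).continuous.continuousAt (x := x)
  exact (hcont.eventually_ne (hx j hj)).and (eventually_signBit_eq hcont (hx j hj))

lemma mem_closure_setOf_signPattern_eq [Finite ι] (h : IsTriangular f g) {s : ι → ZMod 2}
    (hi : f i x = 0) (hx : ∀ j ≠ i, f j x ≠ 0) (hs : ∀ j ≠ i, signPattern f x j = s j) :
    x ∈ closure {y ∈ nonvanishingSet f | signPattern f y = s} := by
  obtain ⟨r, hr, hrs⟩ := (isConnected_setOf_signBit_eq (s i)).nonempty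
  have hslope : g i x ≠ 0 := h.slope_ne_zero i x fun j hj => hx j hj.ne
  let γ (t : ℝ) : ι → ℝ := x + (t * r / g i x) • Pi.single i 1
  have hγ : Tendsto γ (𝓝[>] 0) (𝓝 x) := by
    have : Continuous γ := by fun_prop
    simpa [γ] using this.continuousAt.tendsto.mono_left (nhdsWithin_le_nhds (a := 0))
  refine mem_closure_of_tendsto hγ ?_
  filter_upwards [hγ.eventually (h.eventually_signPattern_eq hx), self_mem_nhdsWithin] with t ht ht0
  have hvalue : f i (γ t) = t * r := by
    simp only [γ, h.add_smul_single, hi, div_mul_cancel₀ _ hslope, zero_add]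
  have hne : f i (γ t) ≠ 0 := hvalue ▸ mul_ne_zero (ne_of_gt ht0) hr
  refine ⟨fun j => ?_, funext fun j => ?_⟩ <;> by_cases hj : j = i
  · exact hj ▸ hne
  · exact (ht j hj).1
  · rw [hj, signPattern, hvalue, signBit_mul (ne_of_gt ht0) hr, signBit_of_pos ht0, zero_add, hrs]
  · rw [(ht j hj).2, hs j hj]

lemma mem_connectedComponentIn_of_signPattern_eq [Finite ι] (h : IsTriangular f g)
    {U : Set (ι → ℝ)} (hU : nonvanishingSet f ⊆ U) (hx : x ∈ nonvanishingSet f)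
    (hy : y ∈ nonvanishingSet f) (hxy : signPattern f x = signPattern f y) :
    y ∈ connectedComponentIn U x :=
  (h.isConnected_setOf_signPattern_eq _).isPreconnected.subset_connectedComponentIn ⟨hx, rfl⟩
    (fun _ hz => hU hz.1) ⟨hy, hxy.symm⟩

lemma mem_connectedComponentIn_of_common_wall [Finite ι] (h : IsTriangular f g)
    {U : Set (ι → ℝ)} (hU : nonvanishingSet f ⊆ U) (hx : x ∈ nonvanishingSet f)
    (hy : y ∈ nonvanishingSet f) (hxy : ∀ j ≠ i, signPattern f x j = signPattern f y j)
    (huU : u ∈ U) (hui : f i u = 0) (hu : ∀ j ≠ i, f j u ≠ 0)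
    (hux : ∀ j ≠ i, signPattern f u j = signPattern f x j) : y ∈ connectedComponentIn U x := by
  have hpreconnected {z} (hs : ∀ j ≠ i, signPattern f u j = signPattern f z j) : IsPreconnected
      (insert u {y ∈ nonvanishingSet f | signPattern f y = signPattern f z}) :=
    (h.isConnected_setOf_signPattern_eq _).isPreconnected.subset_closure (subset_insert _ _)
      (insert_subset (h.mem_closure_setOf_signPattern_eq hui hu hs) subset_closure)
  refine ((hpreconnected hux).union u (mem_insert _ _) (mem_insert _ _)
    (hpreconnected fun j hj => (hux j hj).trans (hxy j hj))).subset_connectedComponentIn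
    (.inl (.inr ⟨hx, rfl⟩)) (union_subset ?_ ?_) (.inr (.inr ⟨hy, rfl⟩)) <;>
  exact insert_subset huU fun z hz => hU hz.1

lemma differentiableAt_project [Finite ι] (h : IsTriangular f g) (hu : g a u ≠ 0) :
    DifferentiableAt ℝ (project f g a) u := by
  have := Fintype.ofFinite ι
  have hquot : DifferentiableAt ℝ (fun u => f a u / g a u) u := by
    simp only [div_eq_mul_inv]
    exact (h.differentiable a u).mul ((h.differentiable_slope a u).inv hu)
  exact differentiableAt_id.sub (hquot.smul_const _)

lemma project_add_smul_single (h : IsTriangular f g) (hu : g a u ≠ 0) (t : ℝ) :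
    project f g a (u + t • Pi.single a 1) = project f g a u := by
  rw [project, h.add_smul_single, h.slope_add_smul_single _ le_rfl, add_div,
    mul_div_cancel_right₀ _ hu, add_smul, project]
  abel

lemma project_add_smul_single_of_lt (h : IsTriangular f g) (hab : a < b) (u : ι → ℝ) (t : ℝ) :
    project f g a (u + t • Pi.single b 1) = project f g a u + t • Pi.single b 1 := by
  rw [project, h.add_smul_single_of_lt _ hab, h.slope_add_smul_single _ hab.le, project]
  abel

-- The cone over `doubleZeros f g a b` with apex `x` is contained in the image of a smooth map which
-- is constant along the coordinate `b`.
lemma volume_setOf_line_meets_doubleZeros [Fintype ι] (h : IsTriangular f g) (hab : a < b)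
    (hx : f a x ≠ 0) : volume {z | ∃ t : ℝ, x + t • (z - x) ∈ doubleZeros f g a b} = 0 := by
  let O : Set (ι → ℝ) := {w | g a w ≠ 0 ∧ g b (project f g a w) ≠ 0}
  let F (w : ι → ℝ) : ι → ℝ := x + w a • (project f g b (project f g a w) - x)
  have hF : ∀ w ∈ O, DifferentiableAt ℝ F w := fun w hw =>
    (differentiableAt_const _).add ((differentiableAt_apply a w).smul
      (((h.differentiableAt_project hw.2).comp w (h.differentiableAt_project hw.1)).sub
        (differentiableAt_const _)))
  have hconst : ∀ w ∈ O, ∀ t : ℝ, F (w + t • Pi.single b 1) = F w := fun w hw t => by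
    simp [F, h.project_add_smul_single_of_lt hab, h.project_add_smul_single hw.2, hab.ne]
  refine measure_mono_null ?_
    (addHaar_image_eq_zero_of_add_smul volume (by simp : Pi.single b (1 : ℝ) ≠ 0) hF hconst)
  rintro z ⟨t, hfa, hfb, hga, hgb⟩
  set q := x + t • (z - x) with hq
  have ht : t ≠ 0 := by
    rintro rfl
    exact hx (by rwa [hq, zero_smul, add_zero] at hfa)
  have hproj : project f g a (q + (t⁻¹ - q a) • Pi.single a 1) = q := by
    rw [h.project_add_smul_single hga, project_of_eq_zero hfa]
  refine ⟨q + (t⁻¹ - q a) • Pi.single a 1, ⟨?_, hproj.symm ▸ hgb⟩, ?_⟩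
  · rwa [h.slope_add_smul_single _ le_rfl]
  · simp only [F, hproj, project_of_eq_zero hfb]
    simp [hq, smul_smul, ht]

lemma ae_segment_disjoint_doubleZeros [Fintype ι] (h : IsTriangular f g)
    (hx : x ∈ nonvanishingSet f) :
    ∀ᵐ z, ∀ a b, a < b → ∀ q ∈ segment ℝ x z, q ∉ doubleZeros f g a b := by
  refine ae_all_iff.2 fun a => ae_all_iff.2 fun b => ?_
  by_cases hab : a < b
  · refine measure_mono_null (fun z hz => ?_) (h.volume_setOf_line_meets_doubleZeros hab (hx a))
    simp only [mem_compl_iff, mem_ofPred_eq, segment_eq_image', mem_image] at hz ⊢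
    push Not at hz
    obtain ⟨-, -, ⟨t, -, rfl⟩, hq⟩ := hz
    exact ⟨t, hq⟩
  · exact .of_forall fun z hlt => absurd hlt hab

theorem locallyRelated_of_isOpen [Finite ι] (h : IsTriangular f g) {U : Set (ι → ℝ)}
    (hU : IsOpen U) {R : (ι → ℝ) → (ι → ℝ) → Prop} (hR : Equivalence R)
    (hloc : ∀ q ∈ U, (∀ a b, a < b → q ∉ doubleZeros f g a b) →
      LocallyRelated R (nonvanishingSet f) q) {p : ι → ℝ} (hp : p ∈ U) :
    LocallyRelated R (nonvanishingSet f) p := by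
  have := Fintype.ofFinite ι
  obtain ⟨ε, hε, hball⟩ := Metric.isOpen_iff.1 hU p hp
  have hsegment : ∀ x ∈ Metric.ball p ε ∩ nonvanishingSet f, ∀ᵐ z,
      z ∈ Metric.ball p ε ∩ nonvanishingSet f → R x z := by
    intro x hx
    filter_upwards [h.ae_segment_disjoint_doubleZeros hx.2] with z hz hzT
    refine rel_of_isPreconnected (R := R) (convex_segment x z).isPreconnected
      h.dense_nonvanishingSet (fun h₁ h₂ => hR.trans h₁ h₂)
      (fun q hq => hloc q (hball ?_) fun a b hab => hz a b hab q hq)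
      (left_mem_segment ..) hx.2 (right_mem_segment ..) hzT.2
    exact (convex_ball p ε).segment_subset hx.1 hzT.1 hq
  refine ⟨_, inter_mem (nhdsWithin_le_nhds (Metric.ball_mem_nhds p hε)) self_mem_nhdsWithin,
    fun x hx y hy => ?_⟩
  have hpos : volume (Metric.ball p ε ∩ nonvanishingSet f) ≠ 0 :=
    ((Metric.isOpen_ball.inter h.isOpen_nonvanishingSet).measure_pos volume
      (h.dense_nonvanishingSet.inter_open_nonempty _ Metric.isOpen_ball
        ⟨p, Metric.mem_ball_self hε⟩)).ne'
  obtain ⟨z, hxz, hyz⟩ : ∃ z, R x z ∧ R y z := by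
    obtain ⟨z, hz, hxz, hyz⟩ := ((frequently_ae_mem_iff.2 hpos).and_eventually
      ((hsegment x hx).and (hsegment y hy))).exists
    exact ⟨z, hxz hz, hyz hz⟩
  exact hR.trans hxz (hR.symm hyz)

end IsTriangular

end TriangularFamilies

/-! ### Sign patterns of the grid minors -/

section GridMinors

open Filter Function QuadraticMap Relation Set Topology

variable {d k j : ℕ} {s t : Vertex d → ZMod 2} {v w : Vertex d} {x y : Vertex d → ℝ}

/-- The upper unitriangular array of size `d` whose entries above the diagonal are the coordinates
`x`: the bottom right entry of the minor indexed by `v` is `x v`. -/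
def coordinateArray (x : Vertex d → ℝ) (r c : ℕ) : ℝ :=
  if r = c then 1 else if h : r < c ∧ c < d then x ⟨r + 1, c - r, by omega, by omega, by omega⟩
  else 0

/-- The minor of the coordinate array that is indexed by a vertex. -/
def gridMinor (v : Vertex d) (x : Vertex d → ℝ) : ℝ := topMinor (coordinateArray x) v.row v.col

/-- The derivative of `gridMinor v` in the coordinate `v`: the minor above it. -/
def gridSlope (v : Vertex d) (x : Vertex d → ℝ) : ℝ :=
  topMinor (coordinateArray x) (v.row - 1) v.col

variable (d) in
/-- The coordinates of `Sset d`. -/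
def cornerNonvanishingSet : Set (Vertex d → ℝ) :=
  {x | ∀ v : Vertex d, ¬ v.IsMutable → gridMinor v x ≠ 0}

lemma coordinateArray_vertex (x : Vertex d → ℝ) (v : Vertex d) :
    coordinateArray x (v.row - 1) (v.col + (v.row - 1)) = x v := by
  obtain ⟨k, j, hk, hj, hkj⟩ := v
  rw [coordinateArray, if_neg (by simp; omega), dif_pos (by simp; omega)]
  congr
  · simp; omega
  · simp

lemma coordinateArray_congr {r c : ℕ}
    (h : ∀ w : Vertex d, w.row = r + 1 → w.col = c - r → x w = y w) :
    coordinateArray x r c = coordinateArray y r c := by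
  unfold coordinateArray
  split_ifs <;> first | rfl | exact h _ rfl rfl

lemma differentiable_coordinateArray (r c : ℕ) :
    Differentiable ℝ fun x : Vertex d → ℝ => coordinateArray x r c := by
  unfold coordinateArray
  split_ifs <;> fun_prop

lemma differentiable_topMinor_coordinateArray (k j : ℕ) :
    Differentiable ℝ fun x : Vertex d → ℝ => topMinor (coordinateArray x) k j := by
  have hentry (r c : ℕ) := differentiable_coordinateArray (d := d) r c
  simp only [topMinor, Matrix.det_apply, window, Matrix.of_apply]
  fun_prop

lemma topMinor_coordinateArray_zero_right (x : Vertex d → ℝ) (k : ℕ) :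
    topMinor (coordinateArray x) k 0 = 1 :=
  topMinor_zero_right (fun r c h => by rw [coordinateArray, if_neg h.ne', dif_neg (by omega)])
    fun r _ => if_pos rfl

lemma topMinor_coordinateArray_ne_zero (hkj : k + j ≤ d)
    (h : ∀ v : Vertex d, v.row = k → v.col = j → gridMinor v x ≠ 0) :
    topMinor (coordinateArray x) k j ≠ 0 := by
  rcases k.eq_zero_or_pos with rfl | hk
  · simp [topMinor_zero]
  rcases j.eq_zero_or_pos with rfl | hj
  · simp [topMinor_coordinateArray_zero_right]
  · exact h ⟨k, j, hk, hj, hkj⟩ rfl rfl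

lemma entry_signPattern_gridMinor (hkj : k + j ≤ d) :
    entry d k j (signPattern gridMinor x) = signBit (topMinor (coordinateArray x) k j) := by
  rcases k.eq_zero_or_pos with rfl | hk
  · simp [entry, topMinor_zero, signBit_of_pos]
  rcases j.eq_zero_or_pos with rfl | hj
  · simp [entry, topMinor_coordinateArray_zero_right, signBit_of_pos]
  · simp [entry, hk, hj, hkj, signPattern, gridMinor]

theorem isTriangular_gridMinor : IsTriangular (gridMinor (d := d)) gridSlope where
  eq_add v x y h := by
    obtain ⟨n, hn⟩ := Nat.exists_eq_add_of_lt v.row_pos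
    rw [zero_add] at hn
    have := topMinor_succ_of_eq_off_corner (n := n) (j := v.col) (a := coordinateArray x)
      (b := coordinateArray y) fun r c hr _ hcn hne => coordinateArray_congr fun w hwr hwc =>
        h w (Vertex.lt_iff.2 (by have := v.col_pos; omega))
    have hx := coordinateArray_vertex x v
    have hy := coordinateArray_vertex y v
    rw [hn, Nat.add_sub_cancel] at hx hy
    rw [gridMinor, gridMinor, gridSlope, hn, this, hx, hy, Nat.add_sub_cancel]
  slope_congr v x y h := topMinor_congr fun r c hr _ _ => coordinateArray_congr fun w hwr _ =>
    h w (Vertex.lt_iff.2 (.inl (by omega)))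
  slope_ne_zero v x h := topMinor_coordinateArray_ne_zero (by have := v.row_add_col_le; omega)
    fun w hw _ => h w (Vertex.lt_iff.2 (.inl (by have := v.row_pos; omega)))
  differentiable v := differentiable_topMinor_coordinateArray _ _
  differentiable_slope v := differentiable_topMinor_coordinateArray _ _

/-! ### The exchange relation at a vanishing minor -/

/-- The vertex below a mutable vertex. -/
def Vertex.below (v : Vertex d) (hv : v.IsMutable) : Vertex d :=
  ⟨v.row + 1, v.col, v.row.succ_pos, v.col_pos, by have : v.row + v.col < d := hv; omega⟩

lemma topMinor_coordinateArray_exchange (h0 : gridMinor v x = 0) :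
    topMinor (coordinateArray x) (v.row + 1) v.col * topMinor (coordinateArray x) v.row (v.col - 1)
        * topMinor (coordinateArray x) (v.row - 1) (v.col + 1)
      = -(topMinor (coordinateArray x) v.row (v.col + 1)
        * topMinor (coordinateArray x) (v.row - 1) v.col
        * topMinor (coordinateArray x) (v.row + 1) (v.col - 1)) := by
  obtain ⟨k, j, hk, hj, hkj⟩ := v
  obtain ⟨k, rfl⟩ := Nat.exists_eq_succ_of_ne_zero hk.ne'
  obtain ⟨j, rfl⟩ := Nat.exists_eq_succ_of_ne_zero hj.ne'
  exact topMinor_exchange h0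

lemma topMinor_ne_zero_of_lt_below (hv : v.IsMutable)
    (h : ∀ w < v.below hv, w ≠ v → gridMinor w x ≠ 0) (hkj : k + j ≤ d)
    (hlt : k ≤ v.row ∨ k = v.row + 1 ∧ j < v.col) (hne : k ≠ v.row ∨ j ≠ v.col) :
    topMinor (coordinateArray x) k j ≠ 0 :=
  topMinor_coordinateArray_ne_zero hkj fun w hwr hwc =>
    h w (Vertex.lt_iff.2 (by simp only [Vertex.below]; omega)) (by rintro rfl; omega)

lemma gridMinor_below_ne_zero (hv : v.IsMutable) (h0 : gridMinor v x = 0)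
    (h : ∀ w < v.below hv, w ≠ v → gridMinor w x ≠ 0) : gridMinor (v.below hv) x ≠ 0 := by
  intro hbelow
  replace hbelow : topMinor (coordinateArray x) (v.row + 1) v.col = 0 := hbelow
  have hlt : v.row + v.col < d := hv
  have := v.row_pos
  have := v.col_pos
  have hexchange := topMinor_coordinateArray_exchange h0
  rw [hbelow, zero_mul, zero_mul, zero_eq_neg] at hexchange
  refine mul_ne_zero (mul_ne_zero ?_ ?_) ?_ hexchange <;>
  exact topMinor_ne_zero_of_lt_below hv h (by omega) (by omega) (by omega)

lemma neighbourSum_signPattern_gridMinor (hv : v.IsMutable) (h0 : gridMinor v x = 0)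
    (h : ∀ w < v.below hv, w ≠ v → gridMinor w x ≠ 0) :
    neighbourSum (signPattern gridMinor x) v = 1 := by
  have hlt : v.row + v.col < d := hv
  have := v.row_pos
  have := v.col_pos
  have hne {k j : ℕ} := topMinor_ne_zero_of_lt_below (k := k) (j := j) hv h
  have hbelow : topMinor (coordinateArray x) (v.row + 1) v.col ≠ 0 :=
    gridMinor_below_ne_zero hv h0 h
  have h₁ := hne (k := v.row) (j := v.col - 1) (by omega) (by omega) (by omega)
  have h₂ := hne (k := v.row - 1) (j := v.col + 1) (by omega) (by omega) (by omega)
  have h₃ := hne (k := v.row) (j := v.col + 1) (by omega) (by omega) (by omega)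
  have h₄ := hne (k := v.row - 1) (j := v.col) (by omega) (by omega) (by omega)
  have h₅ := hne (k := v.row + 1) (j := v.col - 1) (by omega) (by omega) (by omega)
  have hsign := congrArg signBit (topMinor_coordinateArray_exchange h0)
  rw [signBit_neg (mul_ne_zero (mul_ne_zero h₃ h₄) h₅), signBit_mul (mul_ne_zero hbelow h₁) h₂,
    signBit_mul hbelow h₁, signBit_mul (mul_ne_zero h₃ h₄) h₅, signBit_mul h₃ h₄] at hsign
  rw [neighbourSum]
  simp only [entry_signPattern_gridMinor (x := x) (d := d), show v.row + 1 + v.col ≤ d by omega,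
    show v.row + (v.col - 1) ≤ d by omega, show v.row - 1 + (v.col + 1) ≤ d by omega,
    show v.row + (v.col + 1) ≤ d by omega, show v.row - 1 + v.col ≤ d by omega,
    show v.row + 1 + (v.col - 1) ≤ d by omega]
  rw [hsign]
  linear_combination CharTwo.add_self_eq_zero
    (signBit (topMinor (coordinateArray x) v.row (v.col + 1))
      + signBit (topMinor (coordinateArray x) (v.row - 1) v.col)
      + signBit (topMinor (coordinateArray x) (v.row + 1) (v.col - 1)))

lemma entry_congr (h : ∀ w : Vertex d, w.row = k → w.col = j → s w = t w) :
    entry d k j s = entry d k j t := by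
  unfold entry
  split_ifs
  · exact h _ rfl rfl
  · rfl

lemma apply_below_eq_of_neighbourSum_eq (hv : v.IsMutable)
    (hst : neighbourSum s v = neighbourSum t v) (h : ∀ w < v.below hv, w ≠ v → s w = t w) :
    s (v.below hv) = t (v.below hv) := by
  have hrow := v.row_pos
  have hcol := v.col_pos
  have hentry {k j : ℕ} (hlt : k ≤ v.row ∨ k = v.row + 1 ∧ j < v.col)
      (hne : k ≠ v.row ∨ j ≠ v.col) : entry d k j s = entry d k j t := entry_congr fun w hwr hwc =>
    h w (Vertex.lt_iff.2 (by simp only [Vertex.below]; omega)) (by rintro rfl; omega)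
  rw [← entry_row_col s, ← entry_row_col t]
  rw [neighbourSum, neighbourSum, hentry (k := v.row + 1) (j := v.col - 1) (by omega) (by omega),
    hentry (k := v.row - 1) (j := v.col) (by omega) (by omega),
    hentry (k := v.row) (j := v.col + 1) (by omega) (by omega),
    hentry (k := v.row - 1) (j := v.col + 1) (by omega) (by omega),
    hentry (k := v.row) (j := v.col - 1) (by omega) (by omega)] at hst
  exact add_right_cancel (add_right_cancel (add_right_cancel (add_right_cancel
    (add_right_cancel hst))))

lemma gridSlope_ne_zero_of_ne_below (hw : ∀ hv : v.IsMutable, w ≠ v.below hv)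
    (h : ∀ u < w, u ≠ v → gridMinor u x ≠ 0) : gridSlope w x ≠ 0 := by
  have := w.row_pos
  have hle := w.row_add_col_le
  refine topMinor_coordinateArray_ne_zero (by omega) fun u hur huc =>
    h u (Vertex.lt_iff.2 (.inl (by omega))) ?_
  rintro rfl
  exact hw (show u.row + u.col < d by omega)
    (Vertex.ext (by simp only [Vertex.below]; omega) huc.symm)

-- The minor below `v` cannot be adjusted by its own coordinate once the minor at `v` vanishes, but
-- then the exchange relation forces it to have the prescribed sign.
lemma exists_gridMinor_eq_zero (hv : v.IsMutable) (hs : neighbourSum s v = 1) :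
    ∃ x, gridMinor v x = 0 ∧ (∀ w ≠ v, gridMinor w x ≠ 0) ∧
      ∀ w ≠ v, signPattern gridMinor x w = s w := by
  let I : Vertex d → Set ℝ := update (fun w => {r | r ≠ 0 ∧ signBit r = s w}) v {0}
  have hIv : I v = {0} := update_self ..
  have hI {w} (hw : w ≠ v) : I w = {r | r ≠ 0 ∧ signBit r = s w} := update_of_ne hw ..
  have hnonempty (w) : (I w).Nonempty := by
    rcases eq_or_ne w v with rfl | hw
    · exact hIv ▸ singleton_nonempty 0
    · exact hI hw ▸ (isConnected_setOf_signBit_eq (s w)).nonempty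
  obtain ⟨x, hx⟩ : ∃ x, ∀ w, gridMinor w x ∈ I w := by
    refine exists_forall_of_update
      (fun w x y hxy hx => isTriangular_gridMinor.congr hxy ▸ hx) fun w x hx => ?_
    have hlt : ∀ u < w, u ≠ v → gridMinor u x ≠ 0 ∧ signPattern gridMinor x u = s u :=
      fun u hu huv => by have := hx u hu; rwa [hI huv] at this
    rcases eq_or_ne w (v.below hv) with rfl | hw
    · have hvlt : v < v.below hv := Vertex.lt_iff.2 (.inl v.row.lt_succ_self)
      have h0 : gridMinor v x = 0 := by simpa [hIv] using hx v hvlt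
      have hne := fun u hu huv => (hlt u hu huv).1
      refine ⟨x (v.below hv), ?_⟩
      rw [update_eq_self, hI hvlt.ne']
      exact ⟨gridMinor_below_ne_zero hv h0 hne, apply_below_eq_of_neighbourSum_eq hv
        ((neighbourSum_signPattern_gridMinor hv h0 hne).trans hs.symm)
        fun u hu huv => (hlt u hu huv).2⟩
    · obtain ⟨r, hr⟩ := hnonempty w
      obtain ⟨t, ht⟩ := isTriangular_gridMinor.exists_update_eq
        (gridSlope_ne_zero_of_ne_below (fun _ => hw) fun u hu huv => (hlt u hu huv).1) r
      exact ⟨t, ht ▸ hr⟩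
  have hne {w} (hw : w ≠ v) : gridMinor w x ≠ 0 ∧ signPattern gridMinor x w = s w := by
    have := hx w
    rwa [hI hw] at this
  exact ⟨x, by simpa [hIv] using hx v, fun w hw => (hne hw).1, fun w hw => (hne hw).2⟩

lemma eq_of_gridMinor_eq_zero_of_forall_notMem_doubleZeros
    (hx : ∀ a b, a < b → x ∉ doubleZeros gridMinor gridSlope a b) (hv : gridMinor v x = 0)
    (hw : gridMinor w x = 0) : v = w := by
  by_contra hvw
  obtain ⟨a, ha, hamin⟩ := wellFounded_lt.has_min {u | gridMinor u x = 0} ⟨v, hv⟩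
  obtain ⟨b, ⟨hb, hba⟩, hbmin⟩ := wellFounded_lt.has_min {u | gridMinor u x = 0 ∧ u ≠ a} <| by
    rcases eq_or_ne v a with rfl | hva
    · exact ⟨w, hw, Ne.symm hvw⟩
    · exact ⟨v, hv, hva⟩
  have hab : a < b := lt_of_le_of_ne (not_lt.1 (hamin b hb)) hba.symm
  have hne : ∀ u < b, u ≠ a → gridMinor u x ≠ 0 := fun u hu hua h0 => hbmin u ⟨h0, hua⟩ hu
  refine hx a b hab ⟨ha, hb,
    isTriangular_gridMinor.slope_ne_zero a x fun u hu h0 => hamin u h0 hu,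
    gridSlope_ne_zero_of_ne_below (fun ha' hbelow => ?_) hne⟩
  subst hbelow
  exact gridMinor_below_ne_zero ha' ha hne hb

lemma sameOrbit_of_eq_off (hv : v.IsMutable) (hst : ∀ w ≠ v, s w = t w)
    (hs : neighbourSum s v = 1) :
    SameOrbit (gridForm d) (mutableVectors d) s t := by
  by_cases h : s v = t v
  · rw [show s = t from funext fun w => if hw : w = v then hw ▸ h else hst w hw]
    exact .refl
  · refine .single ⟨Pi.single v 1, ⟨v, hv, rfl⟩, funext fun w => ?_⟩
    rw [polar_gridForm_single, hs, one_smul, Pi.add_apply, Pi.single_apply]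
    split_ifs with hw
    · subst hw
      have hflip : ∀ a b : ZMod 2, a ≠ b → b = a + 1 := by decide
      exact hflip _ _ h
    · rw [hst w hw, add_zero]

lemma neighbourSum_congr (h : ∀ w ≠ v, s w = t w) : neighbourSum s v = neighbourSum t v := by
  have := v.row_pos
  have := v.col_pos
  have hentry {k j : ℕ} (hne : k ≠ v.row ∨ j ≠ v.col) : entry d k j s = entry d k j t :=
    entry_congr fun w hwr hwc => h w (by rintro rfl; omega)
  rw [neighbourSum, neighbourSum, hentry (k := v.row + 1) (j := v.col) (by omega),
    hentry (k := v.row) (j := v.col - 1) (by omega),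
    hentry (k := v.row - 1) (j := v.col + 1) (by omega),
    hentry (k := v.row) (j := v.col + 1) (by omega),
    hentry (k := v.row - 1) (j := v.col) (by omega),
    hentry (k := v.row + 1) (j := v.col - 1) (by omega)]

lemma nonvanishingSet_subset_cornerNonvanishingSet :
    nonvanishingSet gridMinor ⊆ cornerNonvanishingSet d := fun _ hx v _ => hx v

lemma isOpen_cornerNonvanishingSet : IsOpen (cornerNonvanishingSet d) := by
  simp only [cornerNonvanishingSet, ofPred_forall]
  exact isOpen_iInter_of_finite fun v => isOpen_iInter_of_finite fun _ =>
    isOpen_ne_fun (isTriangular_gridMinor.differentiable v).continuous continuous_const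

/-- The relation between points whose sign patterns lie in one orbit of the transvections in the
mutable vectors. On `nonvanishingSet gridMinor` it will turn out to mean lying in one component of
`cornerNonvanishingSet d`. -/
def SameSignOrbit (x y : Vertex d → ℝ) : Prop :=
  SameOrbit (gridForm d) (mutableVectors d) (signPattern gridMinor x) (signPattern gridMinor y)

lemma equivalence_sameSignOrbit : Equivalence (SameSignOrbit (d := d)) :=
  ⟨fun _ => .refl, fun h => SameOrbit.symm h, fun h₁ h₂ => ReflTransGen.trans h₁ h₂⟩

lemma locallyRelated_sameSignOrbit_of_forall_notMem_doubleZeros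
    (hx : x ∈ cornerNonvanishingSet d)
    (hx' : ∀ a b, a < b → x ∉ doubleZeros gridMinor gridSlope a b) :
    LocallyRelated SameSignOrbit (nonvanishingSet gridMinor) x := by
  by_cases hzero : ∃ v, gridMinor v x = 0
  · obtain ⟨v, hv⟩ := hzero
    have hmutable : v.IsMutable := not_not.1 fun hmut => hx v hmut hv
    have hne : ∀ w ≠ v, gridMinor w x ≠ 0 := fun w hw h0 =>
      hw (eq_of_gridMinor_eq_zero_of_forall_notMem_doubleZeros hx' h0 hv)
    have hsum : neighbourSum (signPattern gridMinor x) v = 1 :=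
      neighbourSum_signPattern_gridMinor hmutable hv fun w _ => hne w
    refine ⟨_, nhdsWithin_le_nhds (isTriangular_gridMinor.eventually_signPattern_eq hne),
      fun y hy z hz => sameOrbit_of_eq_off hmutable (fun w hw => ?_) ?_⟩
    · exact (hy w hw).2.trans (hz w hw).2.symm
    · rw [neighbourSum_congr fun w hw => (hy w hw).2, hsum]
  · have hconstant : ∀ᶠ y in 𝓝 x, signPattern gridMinor y = signPattern gridMinor x := by
      simp only [funext_iff, eventually_all]
      exact fun v => eventually_signBit_eq
        (isTriangular_gridMinor.differentiable v).continuous.continuousAt (not_exists.1 hzero v)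
    refine ⟨_, nhdsWithin_le_nhds hconstant, fun y hy z hz => ?_⟩
    rw [SameSignOrbit, show signPattern gridMinor y = _ from hy,
      show signPattern gridMinor z = _ from hz]
    exact .refl

lemma mem_connectedComponentIn_of_transvectionStep (hx : x ∈ nonvanishingSet gridMinor)
    (hy : y ∈ nonvanishingSet gridMinor)
    (h : TransvectionStep (gridForm d) (mutableVectors d) (signPattern gridMinor x)
      (signPattern gridMinor y)) : y ∈ connectedComponentIn (cornerNonvanishingSet d) x := by
  obtain ⟨_, ⟨v, hv, rfl⟩, hxy⟩ := h
  rw [polar_gridForm_single] at hxy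
  by_cases hs : neighbourSum (signPattern gridMinor x) v = 0
  · rw [hs, zero_smul, add_zero] at hxy
    exact isTriangular_gridMinor.mem_connectedComponentIn_of_signPattern_eq
      nonvanishingSet_subset_cornerNonvanishingSet hx hy hxy.symm
  · obtain ⟨u, hu0, hu, hus⟩ := exists_gridMinor_eq_zero hv (zmod_two_eq_one_of_ne_zero hs)
    refine isTriangular_gridMinor.mem_connectedComponentIn_of_common_wall
      nonvanishingSet_subset_cornerNonvanishingSet hx hy (fun w hw => ?_)
      (fun w hw => hu w fun hwv => hw (hwv ▸ hv)) hu0 hu hus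
    simp [hxy, hw]

lemma locallyRelated_sameSignOrbit (hx : x ∈ cornerNonvanishingSet d) :
    LocallyRelated SameSignOrbit (nonvanishingSet gridMinor) x :=
  isTriangular_gridMinor.locallyRelated_of_isOpen isOpen_cornerNonvanishingSet
    equivalence_sameSignOrbit
    (fun _ hq => locallyRelated_sameSignOrbit_of_forall_notMem_doubleZeros hq) hx

theorem mem_connectedComponentIn_iff_sameSignOrbit (hx : x ∈ nonvanishingSet gridMinor)
    (hy : y ∈ nonvanishingSet gridMinor) :
    y ∈ connectedComponentIn (cornerNonvanishingSet d) x ↔ SameSignOrbit x y := by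
  have hxU := nonvanishingSet_subset_cornerNonvanishingSet hx
  constructor
  · intro h
    refine rel_of_isPreconnected (R := SameSignOrbit) isPreconnected_connectedComponentIn
      isTriangular_gridMinor.dense_nonvanishingSet ?_ (fun p hp => ?_)
      (mem_connectedComponentIn hxU) hx h hy
    · exact fun h₁ h₂ => equivalence_sameSignOrbit.trans h₁ h₂
    · exact locallyRelated_sameSignOrbit (connectedComponentIn_subset _ _ hp)
  · intro h
    rw [SameSignOrbit] at h
    generalize ht : signPattern gridMinor y = t at h
    induction h generalizing y with
    | refl =>
      exact isTriangular_gridMinor.mem_connectedComponentIn_of_signPattern_eq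
        nonvanishingSet_subset_cornerNonvanishingSet hx hy ht.symm
    | @tail s t _ hst ih =>
      obtain ⟨z, hz, rfl⟩ := (isTriangular_gridMinor.isConnected_setOf_signPattern_eq s).nonempty
      rw [connectedComponentIn_eq (ih hz rfl)]
      exact mem_connectedComponentIn_of_transvectionStep hz hy (ht ▸ hst)

lemma exists_mem_nonvanishingSet_connectedComponentIn_eq (hx : x ∈ cornerNonvanishingSet d) :
    ∃ y ∈ nonvanishingSet gridMinor,
      connectedComponentIn (cornerNonvanishingSet d) x
        = connectedComponentIn (cornerNonvanishingSet d) y := by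
  obtain ⟨y, hyx, hy⟩ := isTriangular_gridMinor.dense_nonvanishingSet.inter_open_nonempty _
    isOpen_cornerNonvanishingSet.connectedComponentIn ⟨x, mem_connectedComponentIn hx⟩
  exact ⟨y, hy, connectedComponentIn_eq hyx⟩

end GridMinors

section Matrices

open Matrix Set Topology

lemma image_connectedComponentIn_of_leftInvOn {X Y : Type*} [TopologicalSpace X]
    [TopologicalSpace Y] {S : Set X} {f : X → Y} {g : Y → X} (hf : ContinuousOn f S)
    (hg : ContinuousOn g (f '' S)) (hgf : LeftInvOn g f S) {x : X} (hx : x ∈ S) :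
    f '' connectedComponentIn S x = connectedComponentIn (f '' S) (f x) := by
  refine (hf.image_connectedComponentIn_subset hx).antisymm fun y hy => ?_
  have hsubset := hg.image_connectedComponentIn_subset (mem_image_of_mem f hx)
  rw [hgf.image_image, hgf hx] at hsubset
  obtain ⟨z, hz, rfl⟩ := connectedComponentIn_subset _ _ hy
  exact ⟨z, hgf hz ▸ hsubset (mem_image_of_mem g hy), rfl⟩

lemma ncard_image_eq_ncard_image_of_forall_eq_iff {α β γ : Type*} {f : α → β} {g : α → γ}
    {A : Set α} (h : ∀ x ∈ A, ∀ y ∈ A, f x = f y ↔ g x = g y) :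
    (f '' A).ncard = (g '' A).ncard := by
  choose r hr hfr using fun (b : β) (hb : b ∈ f '' A) => hb
  refine ncard_congr (fun b hb => g (r b hb)) (fun b hb => mem_image_of_mem g (hr b hb))
    (fun b c hb hc hbc => ?_) ?_
  · rw [← hfr b hb, ← hfr c hc]
    exact (h _ (hr b hb) _ (hr c hc)).2 hbc
  · rintro _ ⟨x, hx, rfl⟩
    have hfx := mem_image_of_mem f hx
    exact ⟨f x, hfx, (h _ (hr _ hfx) x hx).1 (hfr _ hfx)⟩

variable {d k j : ℕ} {s t : Vertex d → ZMod 2} {x y : Vertex d → ℝ}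
  {u : Matrix (Fin d) (Fin d) ℝ}

/-! ### Unitriangular matrices and their coordinates -/

/-- The upper unitriangular matrix with the given coordinates. -/
def ofCoordinates (x : Vertex d → ℝ) : Matrix (Fin d) (Fin d) ℝ :=
  of fun r c => coordinateArray x r c

/-- The entries above the diagonal, each attached to the minor of which it is the bottom right
entry. -/
def coordinates (u : Matrix (Fin d) (Fin d) ℝ) : Vertex d → ℝ := fun v =>
  u ⟨v.row - 1, by have := v.col_pos; have := v.row_add_col_le; omega⟩
    ⟨v.col + (v.row - 1), by have := v.row_pos; have := v.row_add_col_le; omega⟩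

lemma coordinates_ofCoordinates (x : Vertex d → ℝ) : coordinates (ofCoordinates x) = x :=
  funext fun v => coordinateArray_vertex x v

lemma ofCoordinates_coordinates (hu : IsUniUpper d u) : ofCoordinates (coordinates u) = u := by
  ext r c
  rw [ofCoordinates, of_apply, coordinateArray]
  split_ifs with hrc hlt
  · rw [Fin.ext hrc, hu.2]
  · rw [coordinates]
    congr 1
    exact Fin.ext (by simp; omega)
  · exact (hu.1 r c (by omega)).symm

lemma isUniUpper_ofCoordinates (x : Vertex d → ℝ) : IsUniUpper d (ofCoordinates x) :=
  ⟨fun r c h => by rw [ofCoordinates, of_apply, coordinateArray, if_neg (by omega),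
    dif_neg (by omega)], fun r => if_pos rfl⟩

lemma continuous_ofCoordinates : Continuous (ofCoordinates (d := d)) :=
  continuous_matrix fun r c => (differentiable_coordinateArray r c).continuous

lemma continuous_coordinates : Continuous (coordinates (d := d)) :=
  continuous_pi fun _ => continuous_apply_apply _ _

lemma cornerMinor_ofCoordinates (hk : k ≤ d) (x : Vertex d → ℝ) :
    cornerMinor d k (ofCoordinates x) = topMinor (coordinateArray x) k (d - k) := by
  rw [cornerMinor, topMinor]
  congr 1
  ext r c
  rw [of_apply, dif_pos (by omega)]
  rfl

lemma ofCoordinates_mem_Sset_iff : ofCoordinates x ∈ Sset d ↔ x ∈ cornerNonvanishingSet d := by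
  refine ⟨fun h v hv => ?_, fun h => ⟨isUniUpper_ofCoordinates x, fun k hk hkd => ?_⟩⟩
  · rw [Vertex.isMutable_iff, not_not] at hv
    have := v.col_pos
    have hne := h.2 v.row v.row_pos (by omega)
    rwa [cornerMinor_ofCoordinates (by omega), show d - v.row = v.col by omega] at hne
  · rw [cornerMinor_ofCoordinates (by omega)]
    exact h ⟨k, d - k, hk, by omega, by omega⟩ (by simp only [Vertex.isMutable_iff]; omega)

lemma image_ofCoordinates_cornerNonvanishingSet :
    ofCoordinates '' cornerNonvanishingSet d = Sset d := by
  refine Subset.antisymm (image_subset_iff.2 fun x => ofCoordinates_mem_Sset_iff.2) fun u hu => ?_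
  refine ⟨coordinates u, ?_, ofCoordinates_coordinates hu.1⟩
  rwa [← ofCoordinates_mem_Sset_iff, ofCoordinates_coordinates hu.1]

lemma connectedComponentIn_Sset_ofCoordinates (hx : x ∈ cornerNonvanishingSet d) :
    connectedComponentIn (Sset d) (ofCoordinates x)
      = ofCoordinates '' connectedComponentIn (cornerNonvanishingSet d) x := by
  rw [image_connectedComponentIn_of_leftInvOn continuous_ofCoordinates.continuousOn
    continuous_coordinates.continuousOn (fun x _ => coordinates_ofCoordinates x) hx,
    image_ofCoordinates_cornerNonvanishingSet]

lemma connectedComponentIn_Sset_ofCoordinates_eq_iff (hx : x ∈ nonvanishingSet gridMinor)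
    (hy : y ∈ nonvanishingSet gridMinor) :
    connectedComponentIn (Sset d) (ofCoordinates x)
        = connectedComponentIn (Sset d) (ofCoordinates y) ↔
      SameSignOrbit x y := by
  have hyU := nonvanishingSet_subset_cornerNonvanishingSet hy
  have hinjective : Function.Injective (ofCoordinates (d := d)) :=
    Function.LeftInverse.injective coordinates_ofCoordinates
  rw [connectedComponentIn_Sset_ofCoordinates (nonvanishingSet_subset_cornerNonvanishingSet hx),
    connectedComponentIn_Sset_ofCoordinates hyU, hinjective.image_injective.eq_iff,
    ← mem_connectedComponentIn_iff_sameSignOrbit hx hy]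
  exact ⟨fun h => h ▸ mem_connectedComponentIn hyU, connectedComponentIn_eq⟩

lemma exists_connectedComponentIn_Sset_eq (hu : u ∈ Sset d) : ∃ x ∈ nonvanishingSet gridMinor,
    connectedComponentIn (Sset d) u = connectedComponentIn (Sset d) (ofCoordinates x) := by
  rw [← image_ofCoordinates_cornerNonvanishingSet] at hu
  obtain ⟨x, hx, rfl⟩ := hu
  obtain ⟨y, hy, hxy⟩ := exists_mem_nonvanishingSet_connectedComponentIn_eq hx
  refine ⟨y, hy, ?_⟩
  rw [connectedComponentIn_Sset_ofCoordinates hx, hxy, connectedComponentIn_Sset_ofCoordinates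
    (nonvanishingSet_subset_cornerNonvanishingSet hy)]

/-! ### Inversion -/

lemma mul_apply_self_of_isUpperTriangular {m R : Type*} [Fintype m] [LinearOrder m] [CommRing R]
    {A B : Matrix m m R} (hA : A.IsUpperTriangular) (hB : B.IsUpperTriangular) (i : m) :
    (A * B) i i = A i i * B i i := by
  refine (mul_apply ..).trans (Finset.sum_eq_single i (fun b _ hb => ?_) (by simp))
  rcases hb.lt_or_gt with h | h
  · rw [hA h, zero_mul]
  · rw [hB h, mul_zero]

lemma _root_.IsUniUpper.isUpperTriangular (hu : IsUniUpper d u) : u.IsUpperTriangular :=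
  fun i j h => hu.1 i j h

lemma _root_.IsUniUpper.det_eq_one (hu : IsUniUpper d u) : u.det = 1 := by
  simp [det_of_isUpperTriangular hu.isUpperTriangular, hu.2]

lemma _root_.IsUniUpper.inv (hu : IsUniUpper d u) : IsUniUpper d u⁻¹ := by
  have hunit : IsUnit u.det := hu.det_eq_one ▸ isUnit_one
  have := invertibleOfIsUnitDet u hunit
  have hinv : u⁻¹.IsUpperTriangular := blockTriangular_inv_of_blockTriangular hu.isUpperTriangular
  refine ⟨fun i j h => hinv h, fun i => ?_⟩
  have hdiag := mul_apply_self_of_isUpperTriangular hu.isUpperTriangular hinv i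
  rwa [mul_nonsing_inv u hunit, one_apply_eq, hu.2, one_mul, eq_comm] at hdiag

variable (x) in
/-- The coordinates of the inverse matrix. -/
noncomputable def invCoordinates : Vertex d → ℝ := coordinates (ofCoordinates x)⁻¹

lemma ofCoordinates_invCoordinates (x : Vertex d → ℝ) :
    ofCoordinates (invCoordinates x) = (ofCoordinates x)⁻¹ :=
  ofCoordinates_coordinates (isUniUpper_ofCoordinates x).inv

lemma window_zero_mul_of_le {n : ℕ} (hn : n ≤ d) (x y : Vertex d → ℝ) :
    window (coordinateArray x) n 0 * window (coordinateArray y) n 0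
      = (ofCoordinates x * ofCoordinates y).submatrix (Fin.castLE hn) (Fin.castLE hn) := by
  ext r c
  simp only [mul_apply, submatrix_apply, window, of_apply, zero_add]
  refine Fintype.sum_of_injective (Fin.castLE hn) (Fin.castLE_injective hn) _ _ (fun i hi => ?_)
    fun i => rfl
  rw [(isUniUpper_ofCoordinates y).1, mul_zero]
  have : ¬ (i : ℕ) < n := fun h => hi ⟨⟨i, h⟩, rfl⟩
  have := c.2
  simp only [Fin.val_castLE]
  omega

lemma topMinor_invCoordinates (hkj : k + j ≤ d) :
    topMinor (coordinateArray (invCoordinates x)) k j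
      = (-1) ^ (k * j) * topMinor (coordinateArray x) j k := by
  have hunit : IsUnit (ofCoordinates x).det :=
    (isUniUpper_ofCoordinates x).det_eq_one ▸ isUnit_one
  have hone : window (coordinateArray x) (k + j) 0 *
      window (coordinateArray (invCoordinates x)) (k + j) 0 = 1 := by
    rw [window_zero_mul_of_le hkj, ofCoordinates_invCoordinates, mul_nonsing_inv _ hunit,
      submatrix_one _ (Fin.castLE_injective hkj)]
  simpa [topMinor_coordinateArray_zero_right] using topMinor_mul_topMinor_of_window_mul_eq_one hone

lemma gridMinor_invCoordinates (v : Vertex d) :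
    gridMinor v (invCoordinates x) = (-1) ^ (v.row * v.col) * gridMinor v.transpose x :=
  topMinor_invCoordinates v.row_add_col_le

lemma gridMinor_invCoordinates_ne_zero_iff (v : Vertex d) :
    gridMinor v (invCoordinates x) ≠ 0 ↔ gridMinor v.transpose x ≠ 0 := by
  simp [gridMinor_invCoordinates]

lemma invCoordinates_mem_nonvanishingSet (hx : x ∈ nonvanishingSet gridMinor) :
    invCoordinates x ∈ nonvanishingSet gridMinor :=
  fun v => (gridMinor_invCoordinates_ne_zero_iff v).2 (hx v.transpose)

lemma invCoordinates_mem_cornerNonvanishingSet (hx : x ∈ cornerNonvanishingSet d) :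
    invCoordinates x ∈ cornerNonvanishingSet d := fun v hv =>
  (gridMinor_invCoordinates_ne_zero_iff v).2 (hx v.transpose (mt Vertex.isMutable_transpose.1 hv))

lemma signBit_neg_one_pow (n : ℕ) : signBit ((-1) ^ n) = n := by
  induction n with
  | zero => simp [signBit_of_pos]
  | succ n ih => rw [pow_succ, mul_neg_one, signBit_neg (by simp), ih, Nat.cast_succ]

lemma signPattern_invCoordinates (hx : x ∈ nonvanishingSet gridMinor) :
    signPattern gridMinor (invCoordinates x) = invPattern (signPattern gridMinor x) := by
  funext v
  rw [signPattern, gridMinor_invCoordinates, signBit_mul (by simp) (hx v.transpose),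
    signBit_neg_one_pow, Nat.cast_mul, add_comm]
  rfl

lemma inv_mem_Sset (hu : u ∈ Sset d) : u⁻¹ ∈ Sset d := by
  rw [← image_ofCoordinates_cornerNonvanishingSet] at hu
  obtain ⟨x, hx, rfl⟩ := hu
  rw [← ofCoordinates_invCoordinates, ofCoordinates_mem_Sset_iff]
  exact invCoordinates_mem_cornerNonvanishingSet hx

lemma inv_inv_of_mem_Sset (hu : u ∈ Sset d) : u⁻¹⁻¹ = u :=
  nonsing_inv_nonsing_inv u (hu.1.det_eq_one ▸ isUnit_one)

lemma continuousOn_inv_Sset : ContinuousOn (·⁻¹) (Sset d) :=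
  continuous_id.matrix_adjugate.continuousOn.congr fun u hu => by simp [inv_def, hu.1.det_eq_one]

lemma image_inv_connectedComponentIn_Sset (hu : u ∈ Sset d) :
    (·⁻¹) '' connectedComponentIn (Sset d) u = connectedComponentIn (Sset d) u⁻¹ := by
  have himage : (·⁻¹) '' Sset d = Sset d :=
    Subset.antisymm (image_subset_iff.2 fun u hu => inv_mem_Sset hu)
      fun u hu => ⟨u⁻¹, inv_mem_Sset hu, inv_inv_of_mem_Sset hu⟩
  rw [image_connectedComponentIn_of_leftInvOn continuousOn_inv_Sset
    (himage.symm ▸ continuousOn_inv_Sset) (fun u hu => inv_inv_of_mem_Sset hu) hu, himage]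

theorem image_inv_connectedComponentIn_Sset_eq_self_iff (hd : 6 ≤ d) (hodd : Odd d)
    (h8 : d % 8 = 1 ∨ d % 8 = 7) (hx : x ∈ nonvanishingSet gridMinor) :
    (·⁻¹) '' connectedComponentIn (Sset d) (ofCoordinates x)
        = connectedComponentIn (Sset d) (ofCoordinates x) ↔
      Movable (gridForm d) (mutableVectors d) (signPattern gridMinor x) ∧
        IsPalindromic (signPattern gridMinor x) := by
  rw [image_inv_connectedComponentIn_Sset
      (ofCoordinates_mem_Sset_iff.2 (nonvanishingSet_subset_cornerNonvanishingSet hx)),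
    ← ofCoordinates_invCoordinates, eq_comm, connectedComponentIn_Sset_ofCoordinates_eq_iff hx
      (invCoordinates_mem_nonvanishingSet hx), SameSignOrbit, signPattern_invCoordinates hx,
    sameOrbit_invPattern_iff hd hodd h8]

/-! ### Counting the invariant components -/

variable (d) in
/-- The points of the nonvanishing set that represent the inversion-invariant components. -/
def invariantPoints : Set (Vertex d → ℝ) :=
  {x ∈ nonvanishingSet gridMinor | Movable (gridForm d) (mutableVectors d)
    (signPattern gridMinor x) ∧ IsPalindromic (signPattern gridMinor x)}

/-- The invariants that separate the orbits of movable palindromic patterns: one half of the values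
on the hypotenuse of the grid, and the value of the quadratic form. -/
def orbitInvariant (s : Vertex d → ZMod 2) : (Fin (d / 2) → ZMod 2) × ZMod 2 :=
  (fun i => entry d (i + 1) (d - (i + 1)) s, gridForm d s)

lemma setOf_image_inv_eq_self (hd : 6 ≤ d) (hodd : Odd d) (h8 : d % 8 = 1 ∨ d % 8 = 7) :
    {C | (∃ u ∈ Sset d, C = connectedComponentIn (Sset d) u) ∧ (·⁻¹) '' C = C}
      = (fun x => connectedComponentIn (Sset d) (ofCoordinates x)) '' invariantPoints d := by
  ext C
  constructor
  · rintro ⟨⟨u, hu, rfl⟩, hC⟩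
    obtain ⟨x, hx, hux⟩ := exists_connectedComponentIn_Sset_eq hu
    rw [hux, image_inv_connectedComponentIn_Sset_eq_self_iff hd hodd h8 hx] at hC
    exact ⟨x, ⟨hx, hC⟩, hux.symm⟩
  · rintro ⟨x, ⟨hx, hC⟩, rfl⟩
    exact ⟨⟨_, ofCoordinates_mem_Sset_iff.2 (nonvanishingSet_subset_cornerNonvanishingSet hx), rfl⟩,
      (image_inv_connectedComponentIn_Sset_eq_self_iff hd hodd h8 hx).2 hC⟩

lemma IsPalindromic.eq_iff_of_odd (hodd : Odd d) (hs : IsPalindromic s) (ht : IsPalindromic t) :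
    (∀ v : Vertex d, ¬ v.IsMutable → s v = t v) ↔
      ∀ i : Fin (d / 2), entry d (i + 1) (d - (i + 1)) s = entry d (i + 1) (d - (i + 1)) t := by
  have hvertex {v : Vertex d} (hv : ¬ v.IsMutable) : v.row + v.col = d := by
    rwa [Vertex.isMutable_iff, not_not] at hv
  refine ⟨fun h i => entry_congr fun w hwr hwc => h w ?_, fun h v hv => ?_⟩
  · rw [Vertex.isMutable_iff]
    omega
  · have hlow {v : Vertex d} (hv : ¬ v.IsMutable) (hle : v.row ≤ d / 2) : s v = t v := by
      have hi := h ⟨v.row - 1, by have := v.row_pos; omega⟩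
      rwa [Nat.sub_add_cancel v.row_pos, show d - v.row = v.col by have := hvertex hv; omega,
        entry_row_col, entry_row_col] at hi
    rcases le_or_gt v.row (d / 2) with hle | hlt
    · exact hlow hv hle
    · rw [← hs v hv, ← ht v hv]
      refine hlow (mt Vertex.isMutable_transpose.1 hv) ?_
      have := hvertex hv
      have := Nat.odd_iff.1 hodd
      simp only [Vertex.transpose]
      omega

lemma sameOrbit_iff_orbitInvariant_eq (hd : 6 ≤ d) (hodd : Odd d)
    (hsm : Movable (gridForm d) (mutableVectors d) s) (hs : IsPalindromic s)
    (htm : Movable (gridForm d) (mutableVectors d) t) (ht : IsPalindromic t) :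
    SameOrbit (gridForm d) (mutableVectors d) s t ↔ orbitInvariant s = orbitInvariant t := by
  rw [sameOrbit_mutableVectors_iff hd, hs.eq_iff_of_odd hodd ht, ← funext_iff, ← Prod.mk.injEq]
  exact ⟨fun h => h.elim (fun hst => by rw [hst]) fun h => h.2.2, fun h => .inr ⟨hsm, htm, h⟩⟩

lemma exists_isPalindromic_entry_eq (hodd : Odd d) (c : Fin (d / 2) → ZMod 2) :
    ∃ s : Vertex d → ZMod 2, IsPalindromic s ∧
      ∀ i : Fin (d / 2), entry d (i + 1) (d - (i + 1)) s = c i := by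
  refine ⟨fun v => if h : min v.row v.col - 1 < d / 2 then c ⟨min v.row v.col - 1, h⟩ else 0,
    fun v _ => by simp only [Vertex.transpose, min_comm], fun ⟨i, hi⟩ => ?_⟩
  have hvertex : 0 < i + 1 ∧ 0 < d - (i + 1) ∧ i + 1 + (d - (i + 1)) ≤ d := by
    have := Nat.odd_iff.1 hodd
    omega
  have hmin : min (i + 1) (d - (i + 1)) - 1 = i := by omega
  simp [entry, hvertex, hmin, hi]

lemma image_orbitInvariant_invariantPoints (hd : 6 ≤ d) (hodd : Odd d) :
    (fun x => orbitInvariant (signPattern gridMinor x)) '' invariantPoints d = univ := by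
  refine eq_univ_of_forall fun ⟨c, q⟩ => ?_
  obtain ⟨s, hs, hc⟩ := exists_isPalindromic_entry_eq hodd c
  obtain ⟨t, htm, hts, hq⟩ := exists_movable_eq_of_not_isMutable hd s q
  have ht : IsPalindromic t := fun v hv => by
    rw [hts v hv, hts _ (mt Vertex.isMutable_transpose.1 hv), hs v hv]
  obtain ⟨x, hx, rfl⟩ := (isTriangular_gridMinor.isConnected_setOf_signPattern_eq t).nonempty
  refine ⟨x, ⟨hx, htm, ht⟩, Prod.ext (funext fun i => ?_) hq⟩
  exact ((ht.eq_iff_of_odd hodd hs).1 hts i).trans (hc i)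

end Matrices

end UnipotentCells

open UnipotentCells

theorem count_inversion_invariant_components (d : ℕ) (hd : 7 ≤ d) (hodd : d % 2 = 1)
    (h8 : d % 8 = 1 ∨ d % 8 = 7) :
    Set.ncard {C : Set (Matrix (Fin d) (Fin d) ℝ) |
        (∃ u ∈ Sset d, C = connectedComponentIn (Sset d) u) ∧
        (fun v : Matrix (Fin d) (Fin d) ℝ => v⁻¹) '' C = C}
      = 2 ^ ((d + 1) / 2) := by
  have hd6 : 6 ≤ d := by omega
  have hodd' : Odd d := Nat.odd_iff.2 hodd
  rw [setOf_image_inv_eq_self hd6 hodd' h8,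
    ncard_image_eq_ncard_image_of_forall_eq_iff
      (g := fun x => orbitInvariant (signPattern gridMinor x)),
    image_orbitInvariant_invariantPoints hd6 hodd']
  · rw [Set.ncard_univ, Nat.card_prod, Nat.card_fun, Nat.card_zmod, Nat.card_fin, ← pow_succ,
      show d / 2 + 1 = (d + 1) / 2 by omega]
  · rintro x ⟨hx, hxm, hxp⟩ y ⟨hy, hym, hyp⟩
    rw [connectedComponentIn_Sset_ofCoordinates_eq_iff hx hy]
    exact sameOrbit_iff_orbitInvariant_eq hd6 hodd' hxm hxp hym hyp
end

section
/- Let d ≥ 2, let e_1, …, e_d be the standard basis of ℝ^d, and let u be a d×d real upper-triangular matrix with all diagonal entries equal to 1. Then for each 1 ≤ k ≤ d−1, the equality span(u·e_{d−k+1}, …, u·e_d) + span(e_{k+1}, …, e_d) = ℝ^d holds if and only if det u^{(k)} ≠ 0, where u^{(k)} is the upper-right k×k block of u (rows 1,…,k and columns d−k+1,…,d). In other words, the flag u·σ₊ fails to be antipodal to the standard descending flag σ₊ at level k exactly when the minor det u^{(k)} vanishes. -/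
/-- `span(e_{m+1}, …, e_d)` (one-based), i.e. the span of the standard basis vectors
with zero-based index at least `m`. -/
def highSpan (d m : ℕ) : Submodule ℝ (Fin d → ℝ) :=
  Submodule.span ℝ {v | ∃ i : Fin d, m ≤ (i : ℕ) ∧ v = Pi.single i 1}

/-- `span(u·e_{d−k+1}, …, u·e_d)` (one-based indexing of columns). -/
def colSpanHigh (d : ℕ) (u : Matrix (Fin d) (Fin d) ℝ) (k : ℕ) :
    Submodule ℝ (Fin d → ℝ) :=
  Submodule.span ℝ {v | ∃ i : Fin d, d - k ≤ (i : ℕ) ∧ v = u.mulVec (Pi.single i 1)}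

/-!
The span of `e_{k+1}, …, e_d` is the kernel of the projection of `ℝ^d` onto its first `k`
coordinates, and a subspace together with the kernel of a surjection spans the source exactly when
the image of the subspace is the whole target. The projections of the last `k` columns of `u` are
the columns of the upper-right `k × k` block, which span `ℝ^k` if and only if its determinant is
nonzero.
-/

theorem ker_funLeft_eq_span_basisFun {R m ι : Type*} [Semiring R] [Finite m] (r : ι → m) :
    LinearMap.ker (LinearMap.funLeft R R r) =
      Submodule.span R (Pi.basisFun R m '' (Set.range r)ᶜ) := by
  ext v
  rw [LinearMap.mem_ker, Module.Basis.mem_span_image, Set.subset_compl_comm,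
    Set.range_subset_iff, funext_iff]
  simp only [LinearMap.funLeft_apply, Pi.zero_apply, Set.mem_compl_iff, Finset.mem_coe,
    Finsupp.mem_support_iff, Pi.basisFun_repr, not_not]

section CommRing

variable {R m n ι : Type*} [CommRing R] [Fintype ι] [DecidableEq ι]

theorem span_range_col_eq_top_iff_isUnit_det (A : Matrix ι ι R) :
    Submodule.span R (Set.range A.col) = ⊤ ↔ IsUnit A.det := by
  rw [← Matrix.range_mulVecLin, LinearMap.range_eq_top, Matrix.coe_mulVecLin,
    Matrix.mulVec_surjective_iff_isUnit, Matrix.isUnit_iff_isUnit_det]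

theorem span_col_sup_span_basisFun_eq_top_iff [Finite m] (A : Matrix m n R) {r : ι → m}
    (hr : Function.Injective r) (c : ι → n) :
    Submodule.span R (A.col '' Set.range c) ⊔
        Submodule.span R (Pi.basisFun R m '' (Set.range r)ᶜ) = ⊤ ↔
      IsUnit (A.submatrix r c).det := by
  have restrict_surjective : LinearMap.range (LinearMap.funLeft R R r) = ⊤ :=
    LinearMap.range_eq_top.2 (LinearMap.funLeft_surjective_of_injective R R r hr)
  have restrict_cols :
      LinearMap.funLeft R R r '' (A.col '' Set.range c) = Set.range (A.submatrix r c).col := by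
    rw [← Set.range_comp, ← Set.range_comp]
    rfl
  rw [← ker_funLeft_eq_span_basisFun, ← LinearMap.map_eq_top_iff restrict_surjective,
    Submodule.map_span, restrict_cols, span_range_col_eq_top_iff_isUnit_det]

end CommRing

section StandardFlag

variable {d k : ℕ}

theorem highSpan_eq_span_basisFun (hk : k ≤ d) :
    highSpan d k = Submodule.span ℝ (Pi.basisFun ℝ (Fin d) '' (Set.range (Fin.castLE hk))ᶜ) := by
  rw [highSpan, Fin.range_castLE]
  congr 1
  ext v
  simp only [Set.mem_ofPred_eq, Set.mem_image, Set.mem_compl_iff, not_lt, Pi.basisFun_apply,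
    eq_comm]

theorem colSpanHigh_eq_span_col (hk : k ≤ d) (u : Matrix (Fin d) (Fin d) ℝ) :
    colSpanHigh d u k = Submodule.span ℝ (u.col '' Set.range (Fin.natAdd_castLEEmb hk)) := by
  rw [colSpanHigh, Fin.range_natAdd_castLEEmb]
  congr 1
  ext v
  simp only [Set.mem_ofPred_eq, Set.mem_image, Matrix.mulVec_single_one, eq_comm]

theorem cornerMinor_eq_det_submatrix (hk : k ≤ d) (u : Matrix (Fin d) (Fin d) ℝ) :
    cornerMinor d k u = (u.submatrix (Fin.castLE hk) (Fin.natAdd_castLEEmb hk)).det := by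
  rw [cornerMinor]
  congr 1
  ext i j
  have hij : (i : ℕ) < d ∧ d - k + (j : ℕ) < d := by omega
  rw [Matrix.of_apply, dif_pos hij, Matrix.submatrix_apply]
  congr 1
  exact Fin.ext (Nat.add_comm _ _)

theorem antipodality_iff_corner_minor_nonzero_general (hk : k ≤ d)
    (u : Matrix (Fin d) (Fin d) ℝ) :
    colSpanHigh d u k ⊔ highSpan d k = ⊤ ↔ cornerMinor d k u ≠ 0 := by
  rw [colSpanHigh_eq_span_col hk, highSpan_eq_span_basisFun hk, cornerMinor_eq_det_submatrix hk,
    span_col_sup_span_basisFun_eq_top_iff u (Fin.castLE_injective hk), isUnit_iff_ne_zero]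

end StandardFlag

theorem antipodality_iff_corner_minor_nonzero (d : ℕ) (hd : 2 ≤ d)
    (u : Matrix (Fin d) (Fin d) ℝ) (hu : IsUniUpper d u)
    (k : ℕ) (hk1 : 1 ≤ k) (hk : k ≤ d - 1) :
    colSpanHigh d u k ⊔ highSpan d k = ⊤ ↔ cornerMinor d k u ≠ 0 :=
  antipodality_iff_corner_minor_nonzero_general (hk.trans (Nat.sub_le d 1)) u
end
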